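/- Let G' be a finite simple graph in which every vertex has degree 1 or degree 3, and suppose every bridge of G' is incident to a vertex of degree 1. Then G' admits a proper edge-coloring with 7 colors in which every edge whose two endpoints both have degree 3 is poor or rich. -/

import Mathlib

open SimpleGraph

/-- A proper edge-coloring: distinct edges of `G` sharing an endpoint get different colors. -/
def IsProperEdgeColoring {V C : Type*} (G : SimpleGraph V) (c : Sym2 V → C) : Prop :=
  ∀ e ∈ G.edgeSet, ∀ f ∈ G.edgeSet, e ≠ f → (∃ v : V, v ∈ e ∧ v ∈ f) → c e ≠ c f

/-- `S_c(v)`: the set of colors appearing on edges incident to `v`. -/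
def colorSet {V C : Type*} (G : SimpleGraph V) (c : Sym2 V → C) (v : V) : Set C :=
  c '' G.incidenceSet v

/-- The edge `uv` is poor: exactly 3 colors appear around its endpoints. -/
def IsPoorAt {V C : Type*} (G : SimpleGraph V) (c : Sym2 V → C) (u v : V) : Prop :=
  (colorSet G c u ∪ colorSet G c v).ncard = 3

/-- The edge `uv` is rich: exactly 5 colors appear around its endpoints. -/
def IsRichAt {V C : Type*} (G : SimpleGraph V) (c : Sym2 V → C) (u v : V) : Prop :=
  (colorSet G c u ∪ colorSet G c v).ncard = 5

/-- A normal edge-coloring: a proper edge-coloring in which every edge is poor or rich. -/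
def IsNormalEdgeColoring {V C : Type*} (G : SimpleGraph V) (c : Sym2 V → C) : Prop :=
  IsProperEdgeColoring G c ∧
    ∀ u v : V, G.Adj u v → IsPoorAt G c u v ∨ IsRichAt G c u v

/-- A nowhere-zero flow with values in an additive group `M` (all elements self-inverse in our
applications): nonzero on every edge, and at every vertex the values on incident edges sum to 0. -/
def IsNowhereZeroFlow {V M : Type*} [AddCommMonoid M] (G : SimpleGraph V)
    (θ : Sym2 V → M) : Prop :=
  (∀ e ∈ G.edgeSet, θ e ≠ 0) ∧ ∀ v : V, ∑ᶠ e ∈ G.incidenceSet v, θ e = 0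

/-- `G` is `k`-edge-connected: connected, and still connected after deleting any set of
fewer than `k` edges. -/
def EdgeConnGe {V : Type*} (G : SimpleGraph V) (k : ℕ) : Prop :=
  G.Connected ∧ ∀ s : Set (Sym2 V), s.ncard < k → (G.deleteEdges s).Connected

/-- `G` is cubic: every vertex has degree 3. -/
def IsCubic {V : Type*} (G : SimpleGraph V) : Prop :=
  ∀ v : V, (G.neighborSet v).ncard = 3

/-- `G` is bridgeless: no edge is a bridge. -/
def Bridgeless {V : Type*} (G : SimpleGraph V) : Prop :=
  ∀ e ∈ G.edgeSet, ¬ G.IsBridge e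

namespace N7
section
open scoped Classical
open Finset
set_option linter.unusedSectionVars false
set_option linter.unusedSimpArgs false

variable {V E : Type*} [Fintype V] [Fintype E] {A : Type*} [AddCommGroup A] [Module (ZMod 2) A]

/-- boundary of an edge function (characteristic two, loops cancel) -/
noncomputable def bd (s t : E → V) (f : E → A) (v : V) : A :=
  ∑ e, ((if s e = v then f e else 0) + (if t e = v then f e else 0))

/-- edge `e` crosses `R` -/
def cr (s t : E → V) (R : Set V) (e : E) : Prop := ¬ (s e ∈ R ↔ t e ∈ R)

/-- the cut of `R` -/
noncomputable def cut (s t : E → V) (R : Set V) : Finset E := univ.filter (fun e => cr s t R e)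

/-- connectivity by the edges of `D` -/
def con (s t : E → V) (D : Set E) (x y : V) : Prop :=
  ∀ R : Set V, x ∈ R → (∀ e ∈ D, (s e ∈ R ↔ t e ∈ R)) → y ∈ R

lemma aa (a : A) : a + a = 0 := ZModModule.add_self a

lemma add_eq_zero' {a b : A} (h : a + b = 0) : a = b := by
  have := aa b
  exact add_right_cancel (h.trans this.symm)

lemma bd_add (s t : E → V) (f g : E → A) : bd s t (f + g) = bd s t f + bd s t g := by
  funext v
  simp only [bd, Pi.add_apply, ← Finset.sum_add_distrib]
  refine Finset.sum_congr rfl fun e _ => ?_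
  split_ifs <;> abel

lemma bd_zero (s t : E → V) : bd s t (0 : E → A) = 0 := by
  funext v; simp [bd]

lemma bd_sum {ι : Type*} (s t : E → V) (I : Finset ι) (f : ι → E → A) :
    bd s t (∑ i ∈ I, f i) = ∑ i ∈ I, bd s t (f i) := by
  induction I using Finset.induction_on with
  | empty => simp [bd_zero]
  | insert a I ha ih => rw [Finset.sum_insert ha, Finset.sum_insert ha, bd_add, ih]

lemma bd_single (s t : E → V) (g : E) (a : A) :
    bd s t (Pi.single g a) = Pi.single (s g) a + Pi.single (t g) a := by
  funext v
  simp only [bd, Pi.add_apply, Finset.sum_add_distrib]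
  congr 1
  · rw [Finset.sum_eq_single g]
    · simp [Pi.single_apply, eq_comm]
    · intro e _ h; simp [Pi.single_apply, h]
    · simp
  · rw [Finset.sum_eq_single g]
    · simp [Pi.single_apply, eq_comm]
    · intro e _ h; simp [Pi.single_apply, h]
    · simp

lemma cut_sum (s t : E → V) (f : E → A) (R : Set V) :
    ∑ v ∈ univ.filter (fun v => v ∈ R), bd s t f v = ∑ e ∈ cut s t R, f e := by
  simp only [bd]
  rw [Finset.sum_comm]
  simp only [cut, Finset.sum_filter]
  refine Finset.sum_congr rfl fun e _ => ?_
  have h1 : ∀ w : V, (∑ v : V, if v ∈ R then (if w = v then f e else 0) else 0)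
      = if w ∈ R then f e else 0 := by
    intro w
    rw [Finset.sum_eq_single w]
    · simp
    · intro b _ hb; simp [Ne.symm hb]
    · simp
  have : (∑ v : V, if v ∈ R then ((if s e = v then f e else 0) + (if t e = v then f e else 0)) else 0)
     = (if s e ∈ R then f e else 0) + (if t e ∈ R then f e else 0) := by
    rw [← h1 (s e), ← h1 (t e), ← Finset.sum_add_distrib]
    refine Finset.sum_congr rfl fun v _ => ?_
    split_ifs <;> simp
  rw [this]
  unfold cr
  by_cases h1 : s e ∈ R <;> by_cases h2 : t e ∈ R <;> simp [h1, h2, aa]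

lemma con_refl (s t : E → V) (D : Set E) (x : V) : con s t D x x := fun _ h _ => h

lemma con_symm {s t : E → V} {D : Set E} {x y : V} (h : con s t D x y) : con s t D y x := by
  intro R hy hR
  by_contra hx
  exact h Rᶜ hx (fun e he => by simpa using not_congr (hR e he)) hy

lemma con_trans {s t : E → V} {D : Set E} {x y z : V} (h : con s t D x y) (h' : con s t D y z) :
    con s t D x z := fun R hx hR => h' R (h R hx hR) hR

lemma con_mono {s t : E → V} {D D' : Set E} (hD : D ⊆ D') {x y : V} (h : con s t D x y) :
    con s t D' x y := fun R hx hR => h R hx (fun e he => hR e (hD he))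

lemma con_edge (s t : E → V) {D : Set E} {e : E} (he : e ∈ D) : con s t D (s e) (t e) :=
  fun _ hx hR => (hR e he).1 hx

lemma con_closed (s t : E → V) (D : Set E) (x : V) {e : E} (he : e ∈ D) :
    s e ∈ {v | con s t D x v} ↔ t e ∈ {v | con s t D x v} :=
  ⟨fun h => con_trans h (con_edge s t he), fun h => con_trans h (con_symm (con_edge s t he))⟩

lemma join {s t : E → V} {D : Set E} {x y : V} (h : con s t D x y) (a : A) :
    ∃ f : E → A, (∀ e, f e ≠ 0 → e ∈ D) ∧ bd s t f = Pi.single x a + Pi.single y a := by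
  have key : ∀ g ∈ D, ∀ v w : V, (s g = v ∧ t g = w ∨ s g = w ∧ t g = v) →
      (∃ f : E → A, (∀ e, f e ≠ 0 → e ∈ D) ∧ bd s t f = Pi.single x a + Pi.single v a) →
      (∃ f : E → A, (∀ e, f e ≠ 0 → e ∈ D) ∧ bd s t f = Pi.single x a + Pi.single w a) := by
    rintro g hg v w hvw ⟨f, hf, hb⟩
    refine ⟨f + Pi.single g a, ?_, ?_⟩
    · intro e he
      by_cases h : e = g
      · rw [h]; exact hg
      · refine hf e ?_
        simpa [Pi.single_apply, h] using he
    · have h2 : (Pi.single v a : V → A) + Pi.single v a = 0 := by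
        funext u; exact aa _
      rw [bd_add, bd_single, hb]
      rcases hvw with ⟨rfl, rfl⟩ | ⟨rfl, rfl⟩
      · rw [add_assoc, ← add_assoc (Pi.single (s g) a : V → A), h2, zero_add]
      · rw [add_comm (Pi.single (s g) a : V → A), add_assoc, ← add_assoc (Pi.single (t g) a : V → A),
          h2, zero_add]
  refine h {v | ∃ f : E → A, (∀ e, f e ≠ 0 → e ∈ D) ∧ bd s t f = Pi.single x a + Pi.single v a} ?_ ?_
  · refine ⟨0, by simp, ?_⟩
    rw [bd_zero]; funext u; exact (aa _).symm
  · intro e he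
    exact ⟨key e he _ _ (Or.inl ⟨rfl, rfl⟩), key e he _ _ (Or.inr ⟨rfl, rfl⟩)⟩

lemma bd_restrict (s t : E → V) (f : E → A) (T : Set V)
    (hT : ∀ e, f e ≠ 0 → (s e ∈ T ↔ t e ∈ T)) (v : V) :
    bd s t (fun e => if s e ∈ T then f e else 0) v = if v ∈ T then bd s t f v else 0 := by
  have : ∀ e, ((if s e = v then (if s e ∈ T then f e else 0) else 0)
      + (if t e = v then (if s e ∈ T then f e else 0) else 0))
      = if v ∈ T then ((if s e = v then f e else 0) + (if t e = v then f e else 0)) else 0 := by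
    intro e
    by_cases h0 : f e = 0
    · simp [h0]
    have := hT e h0
    by_cases h1 : s e = v <;> by_cases h2 : t e = v <;> by_cases h3 : v ∈ T <;> simp_all
  simp only [bd, this]
  split_ifs <;> simp

lemma con_restrict {s t : E → V} (f : E → A) {y v : V} (h : con s t {e | f e ≠ 0} y v) :
    con s t {e | (if s e ∈ {u | con s t {e | f e ≠ 0} y u} then f e else 0) ≠ 0} y v := by
  intro R hy hR
  have := h (R ∩ {u | con s t {e | f e ≠ 0} y u}) ⟨hy, con_refl _ _ _ _⟩ ?_
  · exact this.1
  · intro e he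
    have hc := con_closed s t {e | f e ≠ 0} y he
    by_cases h1 : s e ∈ {u | con s t {e | f e ≠ 0} y u}
    · have := hR e (by simp only [Set.mem_ofPred_eq] at h1 ⊢; rw [if_pos h1]; exact he)
      simp only [Set.mem_inter_iff, h1, hc.1 h1, and_true, this]
    · have h2 := mt hc.2 h1
      simp only [Set.mem_inter_iff, h1, h2, and_false]

lemma con_of_bd {s t : E → V} {f : E → A} {p w : V} {a : A} (ha : a ≠ 0)
    (hb : bd s t f = Pi.single p a + Pi.single w a) : con s t {e | f e ≠ 0} p w := by
  by_contra hw
  set T := {v | con s t {e | f e ≠ 0} p v} with hT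
  have h1 := cut_sum s t f T
  have h2 : ∑ e ∈ cut s t T, f e = 0 := by
    refine Finset.sum_eq_zero fun e he => ?_
    by_contra h
    have := (Finset.mem_filter.1 he).2
    exact this (con_closed s t _ p h)
  have hpw : p ≠ w := fun h => hw (h ▸ con_refl _ _ _ _)
  rw [h2, hb, Finset.sum_eq_single p] at h1
  · simp [Pi.single_apply, hpw] at h1; exact ha h1
  · intro v hv hvp
    have : v ≠ w := by
      rintro rfl; exact hw (Finset.mem_filter.1 hv).2
    simp [Pi.single_apply, hvp, this]
  · intro h; exact absurd (Finset.mem_filter.2 ⟨Finset.mem_univ _, con_refl _ _ _ _⟩) h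

lemma exists_min {α : Type*} (P : α → Prop) (μ : α → ℕ) (h : ∃ a, P a) :
    ∃ a, P a ∧ ∀ b, P b → μ a ≤ μ b := by
  obtain ⟨a0, h0⟩ := h
  have hex : ∃ n, ∃ a, P a ∧ μ a = n := ⟨_, a0, h0, rfl⟩
  obtain ⟨a, ha, hn⟩ := Nat.find_spec hex
  exact ⟨a, ha, fun b hb => hn ▸ Nat.find_min' hex ⟨b, hb, rfl⟩⟩

lemma z2 {a : ZMod 2} (h : a ≠ 0) : a = 1 := by
  revert h; revert a; decide

set_option maxHeartbeats 1000000 in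
theorem menger (s t : E → V) (D : Set E)
    (hD : ∀ R, (univ.filter (fun e => e ∈ D ∧ cr s t R e)).card ≠ 1) {y x : V}
    (h : con s t D y x) :
    ∃ Z : E → ZMod 2, bd s t Z = 0 ∧ (∀ e, Z e ≠ 0 → e ∈ D) ∧ con s t {e | Z e ≠ 0} y x := by
  have key : ∀ g ∈ D, ∀ w x : V, (s g = w ∧ t g = x ∨ s g = x ∧ t g = w) →
      (∃ Z : E → ZMod 2, bd s t Z = 0 ∧ (∀ e, Z e ≠ 0 → e ∈ D) ∧ con s t {e | Z e ≠ 0} y w) →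
      (∃ Z : E → ZMod 2, bd s t Z = 0 ∧ (∀ e, Z e ≠ 0 → e ∈ D) ∧ con s t {e | Z e ≠ 0} y x) := by
    rintro g hg w x hwx ⟨Z, hZ0, hZD, hZw⟩
    by_contra hno
    set VK : Set V := {v | con s t {e | Z e ≠ 0} y v} with hVK
    have hxVK : x ∉ VK := fun h => hno ⟨Z, hZ0, hZD, h⟩
    have hwVK : w ∈ VK := hZw
    have hZcl : ∀ e, Z e ≠ 0 → (s e ∈ VK ↔ t e ∈ VK) := fun e he => con_closed s t _ y he
    have hgcr : ¬ (s g ∈ VK ↔ t g ∈ VK) := by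
      rcases hwx with ⟨h1, h2⟩ | ⟨h1, h2⟩ <;> rw [h1, h2] <;> tauto
    have hZg : Z g = 0 := by
      by_contra h; exact hgcr (hZcl g h)
    set K : E → ZMod 2 := fun e => if s e ∈ VK then Z e else 0 with hK
    have hKZ : ∀ e, K e ≠ 0 → Z e ≠ 0 ∧ s e ∈ VK ∧ t e ∈ VK := by
      intro e he
      have h1 : s e ∈ VK := by by_contra h; simp [hK, h] at he
      have h2 : Z e ≠ 0 := by simpa [hK, h1] using he
      exact ⟨h2, h1, (hZcl e h2).1 h1⟩
    have hKg : K g = 0 := by by_contra h; exact (hKZ g h).1 hZg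
    have hK0 : bd s t K = 0 := by
      funext v
      rw [hK, bd_restrict s t Z VK hZcl v, hZ0]; simp
    have hKcon : ∀ v ∈ VK, con s t {e | K e ≠ 0} y v := fun v hv => con_restrict Z hv
    set D' : Set E := {e | e ∈ D ∧ K e = 0 ∧ e ≠ g} with hD'
    obtain ⟨p, hpx, hpK⟩ : ∃ p, con s t D' x p ∧ p ∈ VK := by
      by_contra hcon
      push Not at hcon
      apply hD {r | con s t D' x r}
      rw [Finset.card_eq_one]
      refine ⟨g, ?_⟩
      ext e
      simp only [Finset.mem_filter, Finset.mem_univ, true_and, Finset.mem_singleton]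
      constructor
      · rintro ⟨heD, hcr⟩
        by_contra heg
        by_cases hKe : K e = 0
        · exact hcr (con_closed s t D' x ⟨heD, hKe, heg⟩)
        · obtain ⟨_, h1, h2⟩ := hKZ e hKe
          have h1' : ¬ con s t D' x (s e) := fun h => hcon _ h h1
          have h2' : ¬ con s t D' x (t e) := fun h => hcon _ h h2
          exact hcr (by simp [h1', h2'])
      · rintro rfl
        refine ⟨hg, ?_⟩
        have h1 : con s t D' x x := con_refl _ _ _ _
        have h2 : ¬ con s t D' x w := fun h => hcon _ h hwVK
        unfold cr
        rcases hwx with ⟨h3, h4⟩ | ⟨h3, h4⟩ <;> simp only [Set.mem_ofPred_eq, h3, h4] <;> tauto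
    obtain ⟨Q, hQD, hQb⟩ := join (A := ZMod 2) hpx 1
    have hpw : con s t {e | K e ≠ 0} p w := con_trans (con_symm (hKcon p hpK)) (hKcon w hwVK)
    obtain ⟨R0, hR0⟩ := join (A := ZMod 2) hpw 1
    obtain ⟨R, ⟨hRK, hRb⟩, hRmin⟩ := exists_min (fun R : E → ZMod 2 =>
      (∀ e, R e ≠ 0 → e ∈ {e | K e ≠ 0}) ∧ bd s t R = Pi.single p 1 + Pi.single w 1)
      (fun R => (univ.filter (fun e => R e ≠ 0)).card) ⟨R0, hR0⟩
    have hRK : ∀ e, R e ≠ 0 → K e ≠ 0 := hRK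
    have hRcl : ∀ e, R e ≠ 0 → (s e ∈ {v | con s t {e | R e ≠ 0} p v} ↔
        t e ∈ {v | con s t {e | R e ≠ 0} p v}) := fun e he => con_closed s t {e | R e ≠ 0} p he
    have hRp : ∀ e, R e ≠ 0 → con s t {e | R e ≠ 0} p (s e) := by
      intro e he
      by_contra hc
      have hw : con s t {e | R e ≠ 0} p w := con_of_bd one_ne_zero hRb
      have := hRmin (fun e => if s e ∈ {v | con s t {e | R e ≠ 0} p v} then R e else 0) ⟨?_, ?_⟩
      · refine absurd this (not_le.2 (Finset.card_lt_card ?_))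
        rw [Finset.ssubset_iff_of_subset]
        · refine ⟨e, by simpa using he, ?_⟩
          have hc' : ¬ (s e ∈ {v | con s t {e | R e ≠ 0} p v}) := hc
          simp only [Finset.mem_filter, Finset.mem_univ, true_and, if_neg hc', not_not]
        · intro e'
          simp only [Finset.mem_filter, Finset.mem_univ, true_and]
          intro h; by_contra h'; simp [h'] at h
      · intro e' he'
        refine hRK e' ?_
        intro h'; simp [h'] at he'
      · funext v
        rw [bd_restrict s t R _ hRcl v, hRb]
        split_ifs with hv
        · rfl
        · have h1 : v ≠ p := by rintro rfl; exact hv (con_refl _ _ _ _)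
          have h2 : v ≠ w := by rintro rfl; exact hv hw
          simp [h1, h2]
    set J : E → ZMod 2 := K + R with hJ
    have hJiff : ∀ e, J e ≠ 0 ↔ (K e ≠ 0 ∧ R e = 0) := by
      intro e
      have := hRK e
      simp only [hJ, Pi.add_apply]
      revert this
      generalize K e = k
      generalize R e = r
      revert k r; decide
    have hJb : bd s t J = Pi.single p 1 + Pi.single w 1 := by
      rw [hJ, bd_add, hK0, hRb, zero_add]
    have hQx : con s t {e | Q e ≠ 0} x p := con_of_bd one_ne_zero hQb
    have hgb : bd s t (Pi.single g (1 : ZMod 2)) = Pi.single w 1 + Pi.single x 1 := by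
      rw [bd_single]
      rcases hwx with ⟨h1, h2⟩ | ⟨h1, h2⟩ <;> rw [h1, h2]
      exact add_comm _ _
    have hxx : ∀ v : V, (Pi.single v (1 : ZMod 2) : V → ZMod 2) + Pi.single v 1 = 0 := by
      intro v; funext u; exact aa _
    have hQ' : ∀ e, Q e ≠ 0 → e ∈ D ∧ K e = 0 ∧ e ≠ g := hQD
    have hKD : ∀ e, K e ≠ 0 → e ∈ D := fun e he => hZD e (hKZ e he).1
    -- general finishing
    have fin : ∀ P : E → ZMod 2, (∀ e, P e ≠ 0 → K e ≠ 0) → bd s t P = Pi.single p 1 + Pi.single w 1 →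
        con s t {e | P e ≠ 0} y p → False := by
      intro P hPK hPb hPc
      apply hno
      have hsub : ∀ e, (Q e ≠ 0 ∨ P e ≠ 0) → (Q + (Pi.single g 1 : E → ZMod 2) + P) e ≠ 0 := by
        rintro e (he | he)
        · obtain ⟨_, h1, h2⟩ := hQ' e he
          have h3 : P e = 0 := by by_contra h; exact hPK e h h1
          simpa [h3, h2] using he
        · have h1 := hPK e he
          have h2 : Q e = 0 := by by_contra h; exact h1 (hQ' e h).2.1
          have h3 : e ≠ g := by rintro rfl; exact h1 hKg
          simpa [h2, h3] using he
      refine ⟨Q + (Pi.single g 1 : E → ZMod 2) + P, ?_, ?_, ?_⟩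
      · rw [bd_add, bd_add, hQb, hgb, hPb]
        have : ∀ a b c : V → ZMod 2, a + a = 0 → b + b = 0 → c + c = 0 →
            a + b + (c + a) + (b + c) = 0 := by
          intro a b c h1 h2 h3
          have : a + b + (c + a) + (b + c) = (a + a) + (b + b) + (c + c) := by abel
          rw [this, h1, h2, h3]; simp
        exact this _ _ _ (hxx _) (hxx _) (hxx _)
      · intro e he
        by_cases h1 : Q e = 0
        · by_cases h2 : e = g
          · rw [h2]; exact hg
          · refine hKD e (hPK e ?_)
            simpa [h1, h2] using he
        · exact (hQ' e h1).1
      · exact con_trans (con_mono (fun e he => hsub e (Or.inr he)) hPc)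
          (con_mono (fun e he => hsub e (Or.inl he)) (con_symm hQx))
    by_cases hpT : con s t {e | J e ≠ 0} y p
    · exact fin J (fun e he => ((hJiff e).1 he).1) hJb hpT
    · have hJcl : ∀ e, J e ≠ 0 → (s e ∈ {v | con s t {e | J e ≠ 0} y v} ↔
          t e ∈ {v | con s t {e | J e ≠ 0} y v}) := fun e he => con_closed s t {e | J e ≠ 0} y he
      have hwT : ¬ con s t {e | J e ≠ 0} y w := fun h =>
        hpT (con_trans h (con_symm (con_of_bd one_ne_zero hJb)))
      set L : E → ZMod 2 := fun e => if s e ∈ {v | con s t {e | J e ≠ 0} y v} then J e else 0 with hL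
      have hLJ : ∀ e, L e ≠ 0 → J e ≠ 0 := by
        intro e he h; simp [hL, h] at he
      have hLb : bd s t L = 0 := by
        funext v
        rw [hL, bd_restrict s t J _ hJcl v, hJb]
        split_ifs with hv
        · have h1 : v ≠ p := by rintro rfl; exact hpT hv
          have h2 : v ≠ w := by rintro rfl; exact hwT hv
          simp [h1, h2]
        · rfl
      obtain ⟨e, heK, hecr⟩ : ∃ e, K e ≠ 0 ∧ ¬ (s e ∈ {v | con s t {e | J e ≠ 0} y v} ↔
          t e ∈ {v | con s t {e | J e ≠ 0} y v}) := by
        by_contra hcon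
        push Not at hcon
        exact hpT (hKcon p hpK _ (con_refl _ _ _ _) (fun e he => hcon e he))
      have heR : R e ≠ 0 := by
        intro h
        exact hecr (hJcl e ((hJiff e).2 ⟨heK, h⟩))
      obtain ⟨τ, hτ1, hτ2⟩ : ∃ τ, con s t {e | J e ≠ 0} y τ ∧ con s t {e | R e ≠ 0} p τ := by
        by_cases h1 : s e ∈ {v | con s t {e | J e ≠ 0} y v}
        · exact ⟨_, h1, hRp e heR⟩
        · have h2 : t e ∈ {v | con s t {e | J e ≠ 0} y v} := by
            by_contra h2
            exact hecr ⟨fun h => absurd h h1, fun h => absurd h h2⟩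
          exact ⟨_, h2, con_trans (hRp e heR) (con_edge s t heR)⟩
      have hRL : ∀ e, R e ≠ 0 ∨ L e ≠ 0 → (R + L) e ≠ 0 := by
        rintro e (he | he)
        · have : L e = 0 := by
            by_contra h
            exact he ((hJiff e).1 (hLJ e h)).2
          simpa [this] using he
        · have := ((hJiff e).1 (hLJ e he)).2
          simpa [this] using he
      refine fin (R + L) ?_ ?_ ?_
      · intro e he
        by_cases h1 : R e = 0
        · have : L e ≠ 0 := by simpa [h1] using he
          exact ((hJiff e).1 (hLJ e this)).1
        · exact hRK e h1
      · rw [bd_add, hRb, hLb, add_zero]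
      · exact con_trans (con_mono (fun e he => hRL e (Or.inr he)) (con_restrict J hτ1))
          (con_mono (fun e he => hRL e (Or.inl he)) (con_symm hτ2))
  refine h {x | ∃ Z : E → ZMod 2, bd s t Z = 0 ∧ (∀ e, Z e ≠ 0 → e ∈ D) ∧
    con s t {e | Z e ≠ 0} y x} ?_ ?_
  · exact ⟨0, bd_zero _ _, by simp, con_refl _ _ _ _⟩
  · intro e he
    exact ⟨key e he _ _ (Or.inl ⟨rfl, rfl⟩), key e he _ _ (Or.inr ⟨rfl, rfl⟩)⟩

end
end N7
namespace N7
section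
open scoped Classical
open Finset
set_option linter.unusedSectionVars false
set_option linter.unusedSimpArgs false

variable {V E : Type*} [Fintype V] [Fintype E] {A : Type*} [AddCommGroup A] [Module (ZMod 2) A]

abbrev B4 := ZMod 2 × ZMod 2

/-- edges inside `U` -/
def inn (s t : E → V) (U : Set V) : Set E := {e | s e ∈ U ∧ t e ∈ U}

/-- edges between `X` and `Y` -/
def btw (s t : E → V) (X Y : Set V) (e : E) : Prop :=
  (s e ∈ X ∧ t e ∈ Y) ∨ (s e ∈ Y ∧ t e ∈ X)

/-- good sets in the sense of Seymour -/
def CG (s t : E → V) (U : Set V) (f1 : E → ZMod 2) : Prop :=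
  bd s t f1 = 0 ∧ (∀ e, f1 e ≠ 0 → e ∈ inn s t U) ∧
  (∀ x ∈ U, ∀ y ∈ U, con s t Set.univ x y → con s t (inn s t U) x y) ∧
  ∀ φ : E → B4, ∃ ψ : E → B4, bd s t ψ = 0 ∧ (∀ e, ψ e ≠ 0 → e ∈ inn s t U) ∧
    ∀ e ∈ inn s t U, f1 e = 0 → φ e + ψ e ≠ 0

lemma solve (s t : E → V) (D : Set E) (β : V → A) (hs : ∑ v, β v = 0)
    (hc : ∀ x y, β x ≠ 0 → β y ≠ 0 → con s t D x y) :
    ∃ η : E → A, (∀ e, η e ≠ 0 → e ∈ D) ∧ bd s t η = β := by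
  by_cases h0 : ∃ w, β w ≠ 0
  swap
  · push Not at h0
    exact ⟨0, by simp, by rw [bd_zero]; funext v; simp [h0 v]⟩
  obtain ⟨w, hw⟩ := h0
  have : ∀ v, ∃ f : E → A, (∀ e, f e ≠ 0 → e ∈ D) ∧
      bd s t f = Pi.single v (β v) + Pi.single w (β v) := by
    intro v
    by_cases hv : β v = 0
    · exact ⟨0, by simp, by rw [bd_zero, hv]; simp⟩
    · exact join (hc v w hv hw) (β v)
  choose F hF1 hF2 using this
  refine ⟨∑ v, F v, ?_, ?_⟩
  · intro e he
    rw [Finset.sum_apply] at he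
    obtain ⟨v, _, hv⟩ := Finset.exists_ne_zero_of_sum_ne_zero he
    exact hF1 v e hv
  · rw [bd_sum, Finset.sum_congr rfl (fun v _ => hF2 v), Finset.sum_add_distrib]
    have h1 : ∑ v, (Pi.single v (β v) : V → A) = β := Finset.univ_sum_single β
    have h2 : ∑ v, (Pi.single w (β v) : V → A) = 0 := by
      funext u
      rw [Finset.sum_apply]
      by_cases hu : u = w
      · subst hu; simpa using hs
      · simp [hu]
    rw [h1, h2, add_zero]

lemma b4_pick : ∀ a b : B4, ∃ α : B4, α ≠ a ∧ α ≠ b := by decide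

lemma b4_one (a : B4) : a + 1 ≠ a := by revert a; decide

lemma pick (N : Finset E) (φ : E → B4)
    (h : (∃ g1 ∈ N, ∃ g2 ∈ N, g1 ≠ g2) ∨ N = ∅) :
    ∃ k : E → B4, ∑ e ∈ N, k e = 0 ∧ ∀ e ∈ N, k e ≠ φ e := by
  rcases h with ⟨g1, h1, g2, h2, h12⟩ | rfl
  swap
  · exact ⟨0, by simp, by simp⟩
  set N' := (N.erase g1).erase g2
  set σ : B4 := ∑ e ∈ N', (φ e + 1)
  obtain ⟨α, hα1, hα2⟩ := b4_pick (φ g1) (φ g2 + σ)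
  refine ⟨fun e => if e = g1 then α else if e = g2 then α + σ else φ e + 1, ?_, ?_⟩
  · rw [← Finset.add_sum_erase N _ h1, ← Finset.add_sum_erase (N.erase g1) _
      (Finset.mem_erase.2 ⟨h12.symm, h2⟩)]
    have : ∑ e ∈ N', (if e = g1 then α else if e = g2 then α + σ else φ e + 1) = σ := by
      refine Finset.sum_congr rfl fun e he => ?_
      have h3 := Finset.mem_erase.1 he
      have h4 := Finset.mem_erase.1 h3.2
      simp [h3.1, h4.1]
    rw [this]
    simp only [if_true, h12.symm, if_false]
    have : α + (α + σ + σ) = (α + α) + (σ + σ) := by abel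
    rw [this, aa, aa, add_zero]
  · intro e he
    by_cases h3 : e = g1
    · simpa [h3] using hα1
    by_cases h4 : e = g2
    · subst h4
      simp only [if_neg h3, if_true]
      intro h5
      apply hα2
      rw [← h5, add_assoc, aa, add_zero]
    · simp only [if_neg h3, if_neg h4]; exact b4_one _

lemma bd_ne (s t : E → V) (f : E → A) (v : V) (h : bd s t f v ≠ 0) :
    ∃ e, f e ≠ 0 ∧ (s e = v ∨ t e = v) := by
  by_contra hc
  push Not at hc
  apply h
  refine Finset.sum_eq_zero fun e _ => ?_
  by_cases h0 : f e = 0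
  · simp [h0]
  · simp [(hc e h0).1, (hc e h0).2]

set_option maxHeartbeats 1000000 in
lemma step (s t : E → V) {U W : Set V} {f1 Z : E → ZMod 2} (hU : CG s t U f1)
    (hUW : ∀ v ∈ W, v ∉ U) (hZb : bd s t Z = 0) (hZW : ∀ e, Z e ≠ 0 → e ∈ inn s t W)
    (hWc : ∀ x ∈ W, ∀ y ∈ W, con s t {e | Z e ≠ 0} x y)
    (hcr : (∃ g1 g2, g1 ≠ g2 ∧ btw s t U W g1 ∧ btw s t U W g2) ∨ cut s t U = ∅) :
    CG s t (U ∪ W) (f1 + Z) := by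
  obtain ⟨hb, hsup, hcon, hgood⟩ := hU
  have hWU : ∀ v ∈ U, v ∉ W := fun v h h' => hUW v h' h
  have innU : inn s t U ⊆ inn s t (U ∪ W) := fun e he => ⟨Or.inl he.1, Or.inl he.2⟩
  have innW : inn s t W ⊆ inn s t (U ∪ W) := fun e he => ⟨Or.inr he.1, Or.inr he.2⟩
  have innUW : ∀ e, e ∈ inn s t U → e ∉ inn s t W := fun e he he' => hUW _ he'.1 he.1
  have btwI : ∀ e, btw s t U W e → e ∈ inn s t (U ∪ W) := by
    rintro e (⟨h1, h2⟩ | ⟨h1, h2⟩)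
    · exact ⟨Or.inl h1, Or.inr h2⟩
    · exact ⟨Or.inr h1, Or.inl h2⟩
  have btwU : ∀ e, btw s t U W e → e ∉ inn s t U := by
    rintro e (⟨h1, h2⟩ | ⟨h1, h2⟩) ⟨h3, h4⟩
    · exact hUW _ h2 h4
    · exact hUW _ h1 h3
  have btwW : ∀ e, btw s t U W e → e ∉ inn s t W := by
    rintro e (⟨h1, h2⟩ | ⟨h1, h2⟩) ⟨h3, h4⟩
    · exact hUW _ h3 h1
    · exact hUW _ h4 h2
  have tri : ∀ e, e ∈ inn s t (U ∪ W) → e ∈ inn s t U ∨ e ∈ inn s t W ∨ btw s t U W e := by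
    rintro e ⟨h1 | h1, h2 | h2⟩
    · exact Or.inl ⟨h1, h2⟩
    · exact Or.inr (Or.inr (Or.inl ⟨h1, h2⟩))
    · exact Or.inr (Or.inr (Or.inr ⟨h1, h2⟩))
    · exact Or.inr (Or.inl ⟨h1, h2⟩)
  -- ends of a `btw` edge
  have ends : ∀ e, btw s t U W e → ∃ u ∈ U, ∃ w ∈ W, ∀ D : Set E, e ∈ D → con s t D u w := by
    rintro e (⟨h1, h2⟩ | ⟨h1, h2⟩)
    · exact ⟨_, h1, _, h2, fun D hD => con_edge s t hD⟩
    · exact ⟨_, h2, _, h1, fun D hD => con_symm (con_edge s t hD)⟩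
  have cUW : ∀ x ∈ U, ∀ y ∈ W, con s t Set.univ x y → con s t (inn s t (U ∪ W)) x y := by
    intro x hx y hy hxy
    rcases hcr with ⟨g1, g2, _, h1, _⟩ | h0
    · obtain ⟨u, hu, w, hw, huw⟩ := ends g1 h1
      have c1 : con s t Set.univ x u := con_trans hxy (con_trans
        (con_mono (Set.subset_univ _) (hWc y hy w hw)) (con_symm (huw _ (Set.mem_univ _))))
      exact con_trans (con_mono innU (hcon x hx u hu c1)) (con_trans (huw _ (btwI _ h1))
        (con_mono (fun e he => innW (hZW e he)) (hWc w hw y hy)))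
    · exfalso
      refine hUW y hy (hxy U hx fun e _ => ?_)
      by_contra h
      have : e ∈ cut s t U := Finset.mem_filter.2 ⟨Finset.mem_univ _, h⟩
      rw [h0] at this; simp at this
  refine ⟨?_, ?_, ?_, ?_⟩
  · rw [bd_add, hb, hZb, add_zero]
  · intro e he
    by_cases h1 : f1 e = 0
    · exact innW (hZW e (by simpa [h1] using he))
    · exact innU (hsup e h1)
  · rintro x (hx | hx) y (hy | hy) hxy
    · exact con_mono innU (hcon x hx y hy hxy)
    · exact cUW x hx y hy hxy
    · exact con_symm (cUW y hy x hx (con_symm hxy))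
    · exact con_mono (fun e he => innW (hZW e he)) (hWc x hx y hy)
  · intro φ
    obtain ⟨k, hk0, hkφ⟩ := pick (univ.filter (fun e => btw s t U W e)) φ (by
      rcases hcr with ⟨g1, g2, h12, h1, h2⟩ | h0
      · left; exact ⟨g1, by simpa using h1, g2, by simpa using h2, h12⟩
      · right
        rw [Finset.filter_eq_empty_iff]
        intro e _ he
        have : e ∈ cut s t U := by
          refine Finset.mem_filter.2 ⟨Finset.mem_univ _, ?_⟩
          unfold cr
          rcases he with ⟨h1, h2⟩ | ⟨h1, h2⟩
          · have := hUW _ h2; tauto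
          · have := hUW _ h1; tauto
        rw [h0] at this; simp at this)
    set h : E → B4 := fun e => if btw s t U W e then k e else
      if e ∈ inn s t W ∧ Z e = 0 then φ e + 1 else 0 with hh
    have hne : ∀ e, h e ≠ 0 → btw s t U W e ∨ e ∈ inn s t W := by
      intro e he
      by_cases h1 : btw s t U W e
      · exact Or.inl h1
      · by_cases h2 : e ∈ inn s t W ∧ Z e = 0
        · exact Or.inr h2.1
        · exact absurd (by simp only [hh, if_neg h1, if_neg h2]) he
    have hcutU : ∑ e ∈ cut s t U, h e = 0 := by
      rw [← hk0]
      symm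
      have : ∑ e ∈ univ.filter (fun e => btw s t U W e), k e
          = ∑ e ∈ univ.filter (fun e => btw s t U W e), h e := by
        refine Finset.sum_congr rfl fun e he => ?_
        simp only [hh, if_pos (Finset.mem_filter.1 he).2]
      rw [this]
      refine Finset.sum_subset_zero_on_sdiff ?_ ?_ (fun _ _ => rfl)
      · intro e he
        have he := (Finset.mem_filter.1 he).2
        refine Finset.mem_filter.2 ⟨Finset.mem_univ _, ?_⟩
        unfold cr
        rcases he with ⟨h1, h2⟩ | ⟨h1, h2⟩
        · have := hUW _ h2; tauto
        · have := hUW _ h1; tauto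
      · intro e he
        by_contra hc
        obtain ⟨h1, h2⟩ := Finset.mem_sdiff.1 he
        rcases hne e hc with h3 | h3
        · exact h2 (Finset.mem_filter.2 ⟨Finset.mem_univ _, h3⟩)
        · have := (Finset.mem_filter.1 h1).2
          exact this ⟨fun h => absurd h (hUW _ h3.1), fun h => absurd h (hUW _ h3.2)⟩
    have hcutW : ∑ e ∈ cut s t W, h e = 0 := by
      rw [← hk0]
      symm
      have : ∑ e ∈ univ.filter (fun e => btw s t U W e), k e
          = ∑ e ∈ univ.filter (fun e => btw s t U W e), h e := by
        refine Finset.sum_congr rfl fun e he => ?_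
        simp only [hh, if_pos (Finset.mem_filter.1 he).2]
      rw [this]
      refine Finset.sum_subset_zero_on_sdiff ?_ ?_ (fun _ _ => rfl)
      · intro e he
        have he := (Finset.mem_filter.1 he).2
        refine Finset.mem_filter.2 ⟨Finset.mem_univ _, ?_⟩
        unfold cr
        rcases he with ⟨h1, h2⟩ | ⟨h1, h2⟩
        · have := hWU _ h1; tauto
        · have := hWU _ h2; tauto
      · intro e he
        by_contra hc
        obtain ⟨h1, h2⟩ := Finset.mem_sdiff.1 he
        rcases hne e hc with h3 | h3
        · exact h2 (Finset.mem_filter.2 ⟨Finset.mem_univ _, h3⟩)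
        · have := (Finset.mem_filter.1 h1).2
          exact this ⟨fun _ => h3.2, fun _ => h3.1⟩
    have sumset : ∀ X : Set V, ∑ e ∈ cut s t X, h e = 0 →
        ∑ v, (if v ∈ X then bd s t h v else 0) = 0 := by
      intro X hX
      have := cut_sum s t h X
      rw [Finset.sum_filter, hX] at this
      exact this
    have hUx : ∀ x, (if x ∈ U then bd s t h x else 0) ≠ 0 → x ∈ U ∧ ∃ w ∈ W, con s t Set.univ x w := by
      intro x hx
      by_cases hxU : x ∈ U
      · rw [if_pos hxU] at hx
        obtain ⟨e, he, hex⟩ := bd_ne s t h x hx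
        refine ⟨hxU, ?_⟩
        rcases hne e he with h1 | h1
        · rcases h1 with ⟨h2, h3⟩ | ⟨h2, h3⟩ <;> rcases hex with rfl | rfl
          · exact ⟨_, h3, con_edge s t (Set.mem_univ _)⟩
          · exact absurd hxU (hUW _ h3)
          · exact absurd hxU (hUW _ h2)
          · exact ⟨_, h2, con_symm (con_edge s t (Set.mem_univ _))⟩
        · rcases hex with rfl | rfl
          · exact absurd hxU (hUW _ h1.1)
          · exact absurd hxU (hUW _ h1.2)
      · rw [if_neg hxU] at hx; exact absurd rfl hx
    obtain ⟨ηU, hηU1, hηU2⟩ := solve s t (inn s t U) (fun v => if v ∈ U then bd s t h v else 0)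
      (sumset U hcutU) (by
        intro x y hx hy
        obtain ⟨hxU, w, hw, hxw⟩ := hUx x hx
        obtain ⟨hyU, w', hw', hyw⟩ := hUx y hy
        exact hcon x hxU y hyU (con_trans hxw (con_trans
          (con_mono (Set.subset_univ _) (hWc w hw w' hw')) (con_symm hyw))))
    obtain ⟨ηW, hηW1, hηW2⟩ := solve s t {e | Z e ≠ 0} (fun v => if v ∈ W then bd s t h v else 0)
      (sumset W hcutW) (by
        intro x y hx hy
        have hx' : x ∈ W := by by_contra h; rw [if_neg h] at hx; exact hx rfl
        have hy' : y ∈ W := by by_contra h; rw [if_neg h] at hy; exact hy rfl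
        exact hWc x hx' y hy')
    set ψ0 : E → B4 := h + ηU + ηW with hψ0
    have hψ0b : bd s t ψ0 = 0 := by
      rw [hψ0, bd_add, bd_add, hηU2, hηW2]
      funext v
      simp only [Pi.add_apply, Pi.zero_apply]
      by_cases h1 : v ∈ U
      · have h2 := hWU v h1
        simp only [if_pos h1, if_neg h2, add_zero, aa]
      · by_cases h2 : v ∈ W
        · simp only [if_neg h1, if_pos h2, add_zero, aa]
        · simp only [if_neg h1, if_neg h2, add_zero]
          by_contra h3
          obtain ⟨e, he, hex⟩ := bd_ne s t h v h3
          have : e ∈ inn s t (U ∪ W) := by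
            rcases hne e he with h4 | h4
            · exact btwI e h4
            · exact innW h4
          rcases hex with rfl | rfl
          · exact this.1.elim h1 h2
          · exact this.2.elim h1 h2
    have hηUe : ∀ e, e ∉ inn s t U → ηU e = 0 := fun e he => by
      by_contra h; exact he (hηU1 e h)
    have hηWe : ∀ e, Z e = 0 → ηW e = 0 := fun e he => by
      by_contra h; exact hηW1 e h he
    obtain ⟨ψ', hψ1, hψ2, hψ3⟩ := hgood (φ + ψ0)
    have hψ'e : ∀ e, e ∉ inn s t U → ψ' e = 0 := fun e he => by
      by_contra h; exact he (hψ2 e h)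
    refine ⟨ψ0 + ψ', ?_, ?_, ?_⟩
    · rw [bd_add, hψ0b, hψ1, add_zero]
    · intro e he
      by_contra hc
      have h1 : e ∉ inn s t U := fun h => hc (innU h)
      have h2 : e ∉ inn s t W := fun h => hc (innW h)
      have h3 : h e = 0 := by
        by_contra h3
        rcases hne e h3 with h4 | h4
        · exact hc (btwI e h4)
        · exact h2 h4
      have h4 : Z e = 0 := by by_contra h4; exact h2 (hZW e h4)
      apply he
      simp [hψ0, h3, hηUe e h1, hηWe e h4, hψ'e e h1]
    · intro e he hfe
      have hZe0 : e ∉ inn s t W → Z e = 0 := fun h1 => by by_contra h4; exact h1 (hZW e h4)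
      rcases tri e he with h1 | h1 | h1
      · have h2 := innUW e h1
        have h3 : f1 e = 0 := by simpa [hZe0 h2] using hfe
        have := hψ3 e h1 h3
        simpa [add_assoc] using this
      · have h2 : e ∉ inn s t U := fun h => innUW e h h1
        have h3 : f1 e = 0 := by by_contra h; exact h2 (hsup e h)
        have h4 : Z e = 0 := by simpa [h3] using hfe
        have h5 : ¬ btw s t U W e := fun h => btwW e h h1
        have h6 : h e = φ e + 1 := by simp only [hh, if_neg h5, if_pos (And.intro h1 h4)]
        simp only [hψ0, Pi.add_apply, hηUe e h2, hηWe e h4, hψ'e e h2, add_zero, h6]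
        intro h7
        exact b4_one _ (add_eq_zero' h7).symm
      · have h2 := btwU e h1
        have h4 := hZe0 (btwW e h1)
        have h6 : h e = k e := by simp only [hh, if_pos h1]
        simp only [hψ0, Pi.add_apply, hηUe e h2, hηWe e h4, hψ'e e h2, add_zero, h6]
        intro h7
        exact hkφ e (Finset.mem_filter.2 ⟨Finset.mem_univ _, h1⟩) (add_eq_zero' h7).symm

end
end N7
namespace N7
section
open scoped Classical
open Finset
set_option linter.unusedSectionVars false
set_option linter.unusedSimpArgs false

variable {V E : Type*} [Fintype V] [Fintype E] {A : Type*} [AddCommGroup A] [Module (ZMod 2) A]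

lemma mem_cut {s t : E → V} {R : Set V} {e : E} : e ∈ cut s t R ↔ cr s t R e := by
  simp [cut]

lemma btw_cr {s t : E → V} {X Y : Set V} (h : ∀ v ∈ X, v ∉ Y) {e : E} (he : btw s t X Y e) :
    e ∈ cut s t X ∧ e ∈ cut s t Y := by
  rw [mem_cut, mem_cut]
  unfold cr
  rcases he with ⟨h1, h2⟩ | ⟨h1, h2⟩
  · have := h _ h1
    have h3 : t e ∉ X := fun h' => h _ h' h2
    tauto
  · have := h _ h2
    have h3 : s e ∉ X := fun h' => h _ h' h1
    tauto

lemma two_of_card {α : Type*} (S : Finset α) (h : 2 ≤ S.card) : ∃ a ∈ S, ∃ b ∈ S, a ≠ b := by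
  obtain ⟨a, ha, b, hb, hab⟩ := Finset.one_lt_card.1 (by omega : 1 < S.card)
  exact ⟨a, ha, b, hb, hab⟩

set_option maxHeartbeats 1000000 in
lemma block (s t : E → V) (h3 : ∀ R, (cut s t R).card ≠ 1 ∧ (cut s t R).card ≠ 2) (U : Set V)
    (hU : cut s t U ≠ ∅) : ∃ (W : Set V) (Z : E → ZMod 2), W.Nonempty ∧ (∀ v ∈ W, v ∉ U) ∧
      bd s t Z = 0 ∧ (∀ e, Z e ≠ 0 → e ∈ inn s t W) ∧
      (∀ x ∈ W, ∀ y ∈ W, con s t {e | Z e ≠ 0} x y) ∧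
      ∃ g1 g2, g1 ≠ g2 ∧ btw s t U W g1 ∧ btw s t U W g2 := by
  set q : Set V → Finset E := fun B => univ.filter (fun e => btw s t B (U ∪ B)ᶜ e) with hq
  have mq : ∀ B e, e ∈ q B ↔ btw s t B (U ∪ B)ᶜ e := by intro B e; simp [hq]
  obtain ⟨B, ⟨hBU, hBc, hBq⟩, hmin⟩ := exists_min (fun B : Set V => (∀ v ∈ B, v ∉ U) ∧
    cut s t B ≠ ∅ ∧ (q B).card ≤ 1) (fun B => B.ncard) ⟨Uᶜ, fun v hv => hv, by
      have : cut s t Uᶜ = cut s t U := by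
        ext e; rw [mem_cut, mem_cut]; unfold cr; simp only [Set.mem_compl_iff]; tauto
      rw [this]; exact hU, by
      have : q Uᶜ = ∅ := by
        ext e; rw [mq]; unfold btw; simp
      rw [this]; simp⟩
  have key : ∀ R : Set V, cut s t (B ∩ R) ≠ ∅ → cut s t (B \ R) ≠ ∅ →
      2 ≤ (univ.filter (fun e => e ∈ inn s t B ∧ cr s t R e)).card := by
    intro R h1 h2
    have ne : ∀ X, cut s t X ≠ ∅ → X.Nonempty := by
      intro X hX
      rw [Set.nonempty_iff_ne_empty]
      rintro rfl
      apply hX; ext e; rw [mem_cut]; unfold cr; simp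
    have n1 := ne _ h1
    have n2 := ne _ h2
    have l1 : (B ∩ R).ncard < B.ncard := by
      refine Set.ncard_lt_ncard ?_ (Set.toFinite _)
      refine ⟨Set.inter_subset_left, fun h => ?_⟩
      obtain ⟨v, hv⟩ := n2
      exact hv.2 (h hv.1).2
    have l2 : (B \ R).ncard < B.ncard := by
      refine Set.ncard_lt_ncard ?_ (Set.toFinite _)
      refine ⟨Set.sdiff_subset, fun h => ?_⟩
      obtain ⟨v, hv⟩ := n1
      exact (h hv.1).2 hv.2
    have q1 : 2 ≤ (q (B ∩ R)).card := by
      by_contra hc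
      exact absurd (hmin (B ∩ R) ⟨fun v hv => hBU v hv.1, h1, by omega⟩) (by simpa using l1)
    have q2 : 2 ≤ (q (B \ R)).card := by
      by_contra hc
      exact absurd (hmin (B \ R) ⟨fun v hv => hBU v hv.1, h2, by omega⟩) (by simpa using l2)
    set C := univ.filter (fun e => e ∈ inn s t B ∧ cr s t R e) with hC
    have mC : ∀ e, e ∈ C ↔ e ∈ inn s t B ∧ cr s t R e := fun e => Finset.mem_filter_univ _
    clear_value C
    set P : E → Prop := fun e => (s e ∈ R ∧ s e ∈ B) ∨ (t e ∈ R ∧ t e ∈ B) with hP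
    have hsplit := Finset.card_filter_add_card_filter_not (s := q B) P
    have s1 : q (B ∩ R) ⊆ (q B).filter P ∪ C := by
      intro e he
      rw [mq] at he
      rw [Finset.mem_union, Finset.mem_filter, mq, mC]
      clear mq mC hmin hBq q1 q2 hsplit l1 l2 h1 h2 h3
      simp only [hP, btw, inn, cr, Set.mem_compl_iff,
        Set.mem_union, Set.mem_inter_iff, Set.mem_ofPred_eq] at he ⊢
      have := hBU (s e); have := hBU (t e)
      by_cases s e ∈ B <;> by_cases t e ∈ B <;> by_cases s e ∈ R <;> by_cases t e ∈ R <;> simp_all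
    have s2 : q (B \ R) ⊆ (q B).filter (fun e => ¬ P e) ∪ C := by
      intro e he
      rw [mq] at he
      rw [Finset.mem_union, Finset.mem_filter, mq, mC]
      clear mq mC hmin hBq q1 q2 hsplit l1 l2 h1 h2 h3
      simp only [hP, btw, inn, cr, Set.mem_compl_iff,
        Set.mem_union, Set.mem_sdiff, Set.mem_ofPred_eq] at he ⊢
      have := hBU (s e); have := hBU (t e)
      by_cases s e ∈ B <;> by_cases t e ∈ B <;> by_cases s e ∈ R <;> by_cases t e ∈ R <;> simp_all
    have c1 := (Finset.card_le_card s1).trans (Finset.card_union_le _ _)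
    have c2 := (Finset.card_le_card s2).trans (Finset.card_union_le _ _)
    omega
  have crBR : ∀ R : Set V, ∀ e ∈ inn s t B, cr s t R e →
      cut s t (B ∩ R) ≠ ∅ ∧ cut s t (B \ R) ≠ ∅ := by
    intro R e he hcr
    constructor
    · refine Finset.ne_empty_of_mem (a := e) ?_
      rw [mem_cut]; unfold cr at *; simp only [Set.mem_inter_iff, he.1, he.2, true_and]; exact hcr
    · refine Finset.ne_empty_of_mem (a := e) ?_
      rw [mem_cut]; unfold cr at *; simp only [Set.mem_sdiff, he.1, he.2, true_and]; tauto
  have hD : ∀ R, (univ.filter (fun e => e ∈ inn s t B ∧ cr s t R e)).card ≠ 1 := by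
    intro R h1
    obtain ⟨e, he⟩ := Finset.card_eq_one.1 h1
    have he' : e ∈ univ.filter (fun e => e ∈ inn s t B ∧ cr s t R e) := by rw [he]; simp
    have he' := (Finset.mem_filter.1 he').2
    obtain ⟨a, b⟩ := crBR R e he'.1 he'.2
    have := key R a b
    omega
  -- two edges
  have hp : 2 ≤ (univ.filter (fun e => btw s t U B e)).card := by
    have h1 : cut s t B ⊆ univ.filter (fun e => btw s t U B e) ∪ q B := by
      intro e he
      rw [mem_cut] at he
      rw [Finset.mem_union, Finset.mem_filter_univ, mq]
      simp only [btw, cr, Set.mem_compl_iff, Set.mem_union] at he ⊢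
      tauto
    have c1 := (Finset.card_le_card h1).trans (Finset.card_union_le _ _)
    have c2 := h3 B
    have c3 := Finset.card_ne_zero.2 (Finset.nonempty_iff_ne_empty.2 hBc)
    omega
  obtain ⟨g1, hg1, g2, hg2, h12⟩ := two_of_card _ hp
  have hg1 := (Finset.mem_filter.1 hg1).2
  have hg2 := (Finset.mem_filter.1 hg2).2
  have ends : ∀ g, btw s t U B g → ∃ x ∈ B, (∃ u ∈ U, (s g = u ∧ t g = x) ∨ (s g = x ∧ t g = u)) := by
    rintro g (⟨h1, h2⟩ | ⟨h1, h2⟩)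
    · exact ⟨_, h2, _, h1, Or.inl ⟨rfl, rfl⟩⟩
    · exact ⟨_, h1, _, h2, Or.inr ⟨rfl, rfl⟩⟩
  obtain ⟨x, hx, u1, hu1, hxg⟩ := ends g1 hg1
  obtain ⟨y, hy, u2, hu2, hyg⟩ := ends g2 hg2
  have hxy : con s t (inn s t B) x y := by
    intro R hxR hR
    by_contra hyR
    have a : cut s t (B ∩ R) ≠ ∅ := by
      refine Finset.ne_empty_of_mem (a := g1) ?_
      rw [mem_cut]; unfold cr
      have : u1 ∉ B := fun h => hBU _ h hu1
      rcases hxg with ⟨h1, h2⟩ | ⟨h1, h2⟩ <;> rw [h1, h2] <;> simp [hx, hxR, this]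
    have b : cut s t (B \ R) ≠ ∅ := by
      refine Finset.ne_empty_of_mem (a := g2) ?_
      rw [mem_cut]; unfold cr
      have : u2 ∉ B := fun h => hBU _ h hu2
      rcases hyg with ⟨h1, h2⟩ | ⟨h1, h2⟩ <;> rw [h1, h2] <;> simp [hy, hyR, this]
    have := key R a b
    have h0 : univ.filter (fun e => e ∈ inn s t B ∧ cr s t R e) = ∅ := by
      rw [Finset.filter_eq_empty_iff]
      rintro e _ ⟨h1, h2⟩
      exact h2 (hR e h1)
    rw [h0] at this; simp at this
  obtain ⟨Z, hZ0, hZD, hZc⟩ := menger s t (inn s t B) hD hxy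
  set W : Set V := {w | con s t {e | Z e ≠ 0} x w} with hW
  have hWB : ∀ w ∈ W, w ∈ B := by
    intro w hw
    refine hw B hx fun e he => ?_
    have := hZD e he
    exact ⟨fun _ => this.2, fun _ => this.1⟩
  have hcl : ∀ e, Z e ≠ 0 → (s e ∈ W ↔ t e ∈ W) := fun e he => con_closed s t _ x he
  refine ⟨W, fun e => if s e ∈ W then Z e else 0, ⟨x, con_refl _ _ _ _⟩,
    fun v hv => hBU v (hWB v hv), ?_, ?_, ?_, g1, g2, h12, ?_, ?_⟩
  · funext v
    rw [bd_restrict s t Z W hcl, hZ0]; simp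
  · intro e he
    by_cases h1 : s e ∈ W
    · simp only [if_pos h1] at he
      exact ⟨h1, (hcl e he).1 h1⟩
    · simp only [if_neg h1] at he; exact absurd rfl he
  · intro a ha b hb
    exact con_trans (con_symm (con_restrict Z ha)) (con_restrict Z hb)
  · have hxW : x ∈ W := con_refl _ _ _ _
    rcases hxg with ⟨h1, h2⟩ | ⟨h1, h2⟩
    · exact Or.inl ⟨h1 ▸ hu1, h2 ▸ hxW⟩
    · exact Or.inr ⟨h1 ▸ hxW, h2 ▸ hu1⟩
  · have hyW : y ∈ W := hZc
    rcases hyg with ⟨h1, h2⟩ | ⟨h1, h2⟩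
    · exact Or.inl ⟨h1 ▸ hu2, h2 ▸ hyW⟩
    · exact Or.inr ⟨h1 ▸ hyW, h2 ▸ hu2⟩

lemma CG_empty (s t : E → V) : CG s t ∅ 0 := by
  refine ⟨bd_zero _ _, by simp, by simp, fun φ => ⟨0, bd_zero _ _, by simp, ?_⟩⟩
  intro e he; exact absurd he.1 (by simp)

lemma grow (s t : E → V) (h3 : ∀ R, (cut s t R).card ≠ 1 ∧ (cut s t R).card ≠ 2) :
    ∀ (n : ℕ) (U : Set V) (f1 : E → ZMod 2), Uᶜ.ncard = n → CG s t U f1 →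
      ∃ f1', CG s t Set.univ f1' ∧ ∀ e, (s e ∈ U ∨ t e ∈ U) → f1' e = f1 e := by
  intro n
  induction n using Nat.strong_induction_on with
  | _ n ih =>
    intro U f1 hn hU
    by_cases hall : U = Set.univ
    · subst hall; exact ⟨f1, hU, fun _ _ => rfl⟩
    have hstep : ∃ (W : Set V) (Z : E → ZMod 2), W.Nonempty ∧ (∀ v ∈ W, v ∉ U) ∧
        (∀ e, Z e ≠ 0 → e ∈ inn s t W) ∧ CG s t (U ∪ W) (f1 + Z) := by
      by_cases h0 : cut s t U = ∅
      · obtain ⟨v, hv⟩ := (Set.ne_univ_iff_exists_notMem U).1 hall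
        refine ⟨{v}, 0, Set.singleton_nonempty v, by simpa using hv, by simp, ?_⟩
        refine step s t hU (by simpa using hv) (bd_zero _ _) (by simp) ?_ (Or.inr h0)
        intro x hx y hy
        rw [Set.mem_singleton_iff.1 hx, Set.mem_singleton_iff.1 hy]
        exact con_refl _ _ _ _
      · obtain ⟨W, Z, hWn, hWU, hZ0, hZW, hWc, hg⟩ := block s t h3 U h0
        exact ⟨W, Z, hWn, hWU, hZW, step s t hU hWU hZ0 hZW hWc (Or.inl hg)⟩
    obtain ⟨W, Z, ⟨w, hw⟩, hWU, hZW, hCG⟩ := hstep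
    have hlt : (U ∪ W)ᶜ.ncard < n := by
      rw [← hn]
      refine Set.ncard_lt_ncard ⟨fun v hv hv' => hv (Or.inl hv'), fun h => ?_⟩ (Set.toFinite _)
      exact h (hWU w hw) (Or.inr hw)
    obtain ⟨f1', h1, h2⟩ := ih _ hlt _ _ rfl hCG
    refine ⟨f1', h1, fun e he => ?_⟩
    rw [h2 e (he.imp Or.inl Or.inl)]
    have : Z e = 0 := by
      by_contra h
      have := hZW e h
      rcases he with he | he
      · exact hWU _ this.1 he
      · exact hWU _ this.2 he
    simp [this]

end
end N7
namespace N7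
section
open scoped Classical
open Finset
set_option linter.unusedSectionVars false
set_option linter.unusedSimpArgs false

variable {V E : Type*} [Fintype V] [Fintype E] {A : Type*} [AddCommGroup A] [Module (ZMod 2) A]

lemma cut_singleton_sum (s t : E → V) (f : E → A) (v : V) :
    bd s t f v = ∑ e ∈ cut s t {v}, f e := by
  rw [← cut_sum]
  rw [Finset.sum_eq_single v]
  · intro w hw h
    exact absurd (by simpa using hw) h
  · intro h; simp at h

lemma bd_push (s t : E → V) (π : V → V) (f : E → A) (w : V) :
    ∑ v ∈ univ.filter (fun v => π v = w), bd s t f v = bd (π ∘ s) (π ∘ t) f w := by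
  rw [cut_singleton_sum (π ∘ s)]
  exact cut_sum s t f {v | π v = w}

lemma contract (K : Set E) : ∀ (n : ℕ) (s t : E → V),
    (univ.filter (fun e => s e ≠ t e)).card = n →
    (∀ R, (cut s t R).card ≠ 1) →
    (∀ R g h, g ∈ K → h ∈ K → g ≠ h → cut s t R ≠ {g, h}) →
    ∃ π : V → V, (∀ R, (cut (π ∘ s) (π ∘ t) R).card ≠ 1 ∧ (cut (π ∘ s) (π ∘ t) R).card ≠ 2) ∧
      (∀ f' : E → A, bd (π ∘ s) (π ∘ t) f' = 0 → (∀ e, f' e ≠ 0) →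
        ∃ f : E → A, bd s t f = 0 ∧ (∀ e, f e ≠ 0) ∧ ∀ e ∈ K, f e = f' e) ∧
      (∀ v, (∀ e, s e = v ∨ t e = v → e ∈ K) → ∀ w, π w = π v → w = v) := by
  intro n
  induction n using Nat.strong_induction_on with
  | _ n ih =>
    intro s t hn hb hK
    by_cases h2 : ∀ R, (cut s t R).card ≠ 2
    · exact ⟨id, fun R => ⟨hb R, h2 R⟩, fun f' h1 h2 => ⟨f', h1, h2, fun _ _ => rfl⟩,
        fun v _ w h => h⟩
    push Not at h2
    obtain ⟨R, hR⟩ := h2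
    obtain ⟨g, h, hgh, hcut⟩ : ∃ g h, g ≠ h ∧ cut s t R = {g, h} ∧ h ∉ K := by
      obtain ⟨g, h, hgh, hc⟩ := Finset.card_eq_two.1 hR
      by_cases hh : h ∈ K
      · refine ⟨h, g, hgh.symm, by rw [hc, Finset.pair_comm], fun hg => hK R g h hg hh hgh hc⟩
      · exact ⟨g, h, hgh, hc, hh⟩
    obtain ⟨hcut, hhK⟩ := hcut
    have hhR : cr s t R h := by rw [← mem_cut, hcut]; simp
    have hnl : s h ≠ t h := by intro h'; apply hhR; rw [h']
    set π1 : V → V := fun v => if v = t h then s h else v with hπ1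
    have hcutπ : ∀ R', cut (π1 ∘ s) (π1 ∘ t) R' = cut s t (π1 ⁻¹' R') := fun R' => rfl
    obtain ⟨π2, p1, p2, p3⟩ := ih _ (by
      rw [← hn]
      refine Finset.card_lt_card ?_
      rw [Finset.ssubset_iff_of_subset]
      · exact ⟨h, by simpa using hnl, by simp [hπ1]⟩
      · intro e he
        rw [Finset.mem_filter_univ] at he ⊢
        intro h'; apply he; simp [h']) (π1 ∘ s) (π1 ∘ t) rfl (fun R' => by rw [hcutπ]; exact hb _)
        (fun R' a b ha hb' hab => by rw [hcutπ]; exact hK _ a b ha hb' hab)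
    refine ⟨π2 ∘ π1, p1, ?_, ?_⟩
    · intro f' hf1 hf2
      obtain ⟨f1, q1, q2, q3⟩ := p2 f' hf1 hf2
      have hbf : bd s t (fun e => if e = h then f1 g else f1 e) = 0 := by
        set f : E → A := fun e => if e = h then f1 g else f1 e with hf
        have hp : ∀ w, ∑ v ∈ univ.filter (fun v => π1 v = w), bd s t f v = 0 := by
          intro w
          rw [bd_push, cut_singleton_sum]
          have := cut_singleton_sum (π1 ∘ s) (π1 ∘ t) f1 w
          rw [q1] at this
          rw [Finset.sum_congr rfl (g := f1)]
          · exact this.symm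
          · intro e he
            have : e ≠ h := by
              rintro rfl
              rw [mem_cut] at he
              exact he (by simp [hπ1])
            simp [hf, this]
        have h1 : ∀ v, v ≠ s h → v ≠ t h → bd s t f v = 0 := by
          intro v hv1 hv2
          have := hp v
          rwa [Finset.sum_eq_single v] at this
          · intro w hw hne
            rw [Finset.mem_filter_univ] at hw
            simp only [hπ1] at hw
            split_ifs at hw with hc
            · exact absurd hw.symm hv1
            · exact absurd hw hne
          · intro hc; exfalso; apply hc; simp [hπ1, hv2]
        have h2 : bd s t f (s h) + bd s t f (t h) = 0 := by
          have := hp (s h)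
          have hset : univ.filter (fun v => π1 v = s h) = {s h, t h} := by
            ext v
            simp only [Finset.mem_filter_univ, Finset.mem_insert, Finset.mem_singleton, hπ1]
            split_ifs with hc <;> simp [hc]
          rwa [hset, Finset.sum_pair hnl] at this
        have h3 : ∑ v ∈ univ.filter (fun v => v ∈ R), bd s t f v = 0 := by
          rw [cut_sum, hcut, Finset.sum_pair hgh]
          simp only [hf, if_neg hgh, if_true, aa]
        have h4 : bd s t f (s h) = 0 := by
          by_cases hs : s h ∈ R
          · have ht : t h ∉ R := fun h' => hhR ⟨fun _ => h', fun _ => hs⟩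
            rwa [Finset.sum_eq_single (s h)] at h3
            · intro w hw hne
              refine h1 w hne ?_
              rintro rfl; exact ht (by simpa using hw)
            · intro hc; exfalso; apply hc; simpa using hs
          · have ht : t h ∈ R := by
              by_contra h'; exact hhR ⟨fun h'' => absurd h'' hs, fun h'' => absurd h'' h'⟩
            rw [Finset.sum_eq_single (t h)] at h3
            · rw [h3, add_zero] at h2; exact h2
            · intro w hw hne
              refine h1 w ?_ hne
              rintro rfl; exact hs (by simpa using hw)
            · intro hc; exfalso; apply hc; simpa using ht
        funext v
        by_cases hv1 : v = s h
        · rw [hv1]; exact h4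
        by_cases hv2 : v = t h
        · rw [hv2]; rw [h4, zero_add] at h2; exact h2
        · exact h1 v hv1 hv2
      refine ⟨_, hbf, ?_, ?_⟩
      · intro e; split_ifs <;> exact q2 _
      · intro e he
        have : e ≠ h := by rintro rfl; exact hhK he
        simp only [if_neg this]; exact q3 e he
    · intro v hv w hw
      have hv1 : v ≠ s h := fun h' => hhK (hv h (Or.inl h'.symm))
      have hv2 : v ≠ t h := fun h' => hhK (hv h (Or.inr h'.symm))
      have hπ : ∀ x, π1 x = v → x = v := by
        intro x hx
        simp only [hπ1] at hx
        split_ifs at hx with hc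
        · exact absurd hx.symm hv1
        · exact hx
      have hπv : π1 v = v := by simp [hπ1, hv2]
      refine hπ w (p3 v ?_ (π1 w) ?_)
      · rintro e (he | he)
        · exact hv e (Or.inl (hπ _ he))
        · exact hv e (Or.inr (hπ _ he))
      · simpa [hπv] using hw

abbrev A8 := ZMod 2 × B4

lemma CG_flow (s t : E → V) {f1 : E → ZMod 2} (h : CG s t Set.univ f1) :
    ∃ f : E → A8, bd s t f = 0 ∧ (∀ e, f e ≠ 0) ∧ ∀ e, (f e).1 = f1 e := by
  obtain ⟨h1, _, _, h4⟩ := h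
  obtain ⟨ψ, a, _, b⟩ := h4 0
  refine ⟨fun e => (f1 e, ψ e), ?_, ?_, fun _ => rfl⟩
  · funext v
    have e1 := congrFun h1 v
    have e2 := congrFun a v
    refine Prod.ext ?_ ?_
    · rw [Pi.zero_apply, Prod.fst_zero]
      rw [Pi.zero_apply] at e1
      rw [← e1]
      simp only [bd, Prod.fst_sum, Prod.fst_add, apply_ite Prod.fst, Prod.fst_zero]
    · rw [Pi.zero_apply, Prod.snd_zero]
      rw [Pi.zero_apply] at e2
      rw [← e2]
      simp only [bd, Prod.snd_sum, Prod.snd_add, apply_ite Prod.snd, Prod.snd_zero]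
  · intro e he
    have h5 : f1 e = 0 := congrArg Prod.fst he
    have h6 : ψ e = 0 := congrArg Prod.snd he
    exact b e ⟨trivial, trivial⟩ h5 (by simp [h6])

/-- eight flow theorem -/
theorem flow8 (s t : E → V) (hb : ∀ R, (cut s t R).card ≠ 1) :
    ∃ f : E → A8, bd s t f = 0 ∧ ∀ e, f e ≠ 0 := by
  obtain ⟨π, h1, h2, _⟩ := contract (A := A8) (∅ : Set E) _ s t rfl hb (by simp)
  obtain ⟨f1, h3, _⟩ := grow _ _ h1 _ ∅ 0 rfl (CG_empty _ _)
  obtain ⟨f', a, b, _⟩ := CG_flow _ _ h3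
  obtain ⟨f, a, b, _⟩ := h2 f' a b
  exact ⟨f, a, b⟩

/-- `v` has exactly the three distinct non-loop edges `x,y,z` -/
def star (s t : E → V) (v : V) (x y z : E) : Prop :=
  (∀ e, (s e = v ∨ t e = v) ↔ (e = x ∨ e = y ∨ e = z)) ∧ s x ≠ t x ∧ s y ≠ t y ∧ s z ≠ t z ∧
    x ≠ y ∧ x ≠ z ∧ y ≠ z

lemma star_cr {s t : E → V} {v : V} {x y z : E} (h : star s t v x y z) (e : E) :
    cr s t {v} e ↔ e = x ∨ e = y ∨ e = z := by
  obtain ⟨h1, h2, h3, h4, _⟩ := h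
  rw [← h1]
  unfold cr
  have : (s e = v ∨ t e = v) → s e ≠ t e := by
    intro h
    rcases (h1 e).1 h with rfl | rfl | rfl <;> assumption
  simp only [Set.mem_singleton_iff]
  constructor
  · tauto
  · intro h h'
    apply this h
    rcases h with h | h
    · rw [h, h'.1 h]
    · rw [h, h'.2 h]

lemma star_cut {s t : E → V} {v : V} {x y z : E} (h : star s t v x y z) :
    cut s t {v} = {x, y, z} := by
  ext e; rw [mem_cut, star_cr h]; simp

lemma star_sum {s t : E → V} {v : V} {x y z : E} (h : star s t v x y z) {f : E → A}
    (hf : bd s t f = 0) : f x + f y + f z = 0 := by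
  have := cut_singleton_sum s t f v
  rw [star_cut h, hf, Finset.sum_insert (by simp [h.2.2.2.2.1, h.2.2.2.2.2.1]),
    Finset.sum_pair h.2.2.2.2.2.2] at this
  rw [add_assoc]; exact this.symm

end
end N7
namespace N7
section
open scoped Classical
open Finset
set_option linter.unusedSectionVars false
set_option linter.unusedSimpArgs false

variable {V E : Type*} [Fintype V] [Fintype E] {A : Type*} [AddCommGroup A] [Module (ZMod 2) A]

set_option maxHeartbeats 1000000 in
lemma spec_core (s t : E → V) (K : Set E) (hbr : ∀ R, (cut s t R).card ≠ 1)
    (hK : ∀ R g h, g ∈ K → h ∈ K → g ≠ h → cut s t R ≠ {g, h})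
    {b c d : V} {e0 e1 e2 c1 c2 : E} (hb : star s t b e0 e1 e2) (hc : star s t c e1 c1 c2)
    (hd : s e2 = d ∨ t e2 = d) (hbc : b ≠ c) (hbd : b ≠ d) (hcd : c ≠ d)
    (k0 : e0 ∈ K) (k1 : e1 ∈ K) (k2 : e2 ∈ K) (k3 : c1 ∈ K) (k4 : c2 ∈ K) :
    ∃ f : E → A8, bd s t f = 0 ∧ (∀ e, f e ≠ 0) ∧ (f e0).1 = 0 ∧ (f e1).1 = 0 ∧ (f e2).1 = 0 ∧
      (f c1).1 = 1 ∧ (f c2).1 = 1 ∧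
      ∀ d1 d2, star s t d e2 d1 d2 → d1 ∈ K → d2 ∈ K → (f d1).1 = 1 ∧ (f d2).1 = 1 := by
  obtain ⟨π, p1, p2, p3⟩ := contract (A := A8) K _ s t rfl hbr hK
  have ib : ∀ w, π w = π b → w = b := p3 b (fun e he => by
    rcases (hb.1 e).1 he with rfl | rfl | rfl <;> assumption)
  have ic : ∀ w, π w = π c → w = c := p3 c (fun e he => by
    rcases (hc.1 e).1 he with rfl | rfl | rfl <;> assumption)
  have lift : ∀ v x y z, star s t v x y z → x ∈ K → y ∈ K → z ∈ K →
      star (π ∘ s) (π ∘ t) (π v) x y z := by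
    intro v x y z h hx hy hz
    have iv : ∀ w, π w = π v → w = v := p3 v (fun e he => by
      rcases (h.1 e).1 he with rfl | rfl | rfl <;> assumption)
    have iv' : ∀ e, (s e = v ∨ t e = v) → s e ≠ t e → (π ∘ s) e ≠ (π ∘ t) e := by
      rintro e (h1 | h1) h2 h3
      · simp only [Function.comp] at h3
        rw [h1] at h3
        exact h2 (h1.trans (iv _ h3.symm).symm)
      · simp only [Function.comp] at h3
        rw [h1] at h3
        exact h2 ((iv _ h3).trans h1.symm)
    refine ⟨fun e => ?_, iv' x ((h.1 x).2 (by simp)) h.2.1, iv' y ((h.1 y).2 (by simp)) h.2.2.1,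
      iv' z ((h.1 z).2 (by simp)) h.2.2.2.1, h.2.2.2.2⟩
    rw [← h.1 e]
    simp only [Function.comp]
    constructor
    · rintro (h1 | h1)
      · exact Or.inl (iv _ h1)
      · exact Or.inr (iv _ h1)
    · rintro (h1 | h1)
      · exact Or.inl (by rw [h1])
      · exact Or.inr (by rw [h1])
  have hb' := lift b _ _ _ hb k0 k1 k2
  have hc' := lift c _ _ _ hc k1 k3 k4
  have hbc' : π b ≠ π c := fun h => hbc (ic _ h)
  have hbd' : π b ≠ π d := fun h => hbd (ib _ h.symm).symm
  have hcd' : π c ≠ π d := fun h => hcd (ic _ h.symm).symm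
  have hd' : (π ∘ s) e2 = π d ∨ (π ∘ t) e2 = π d := hd.imp (congrArg π) (congrArg π)
  have hstar : ∀ d1 d2, star s t d e2 d1 d2 → d1 ∈ K → d2 ∈ K →
      star (π ∘ s) (π ∘ t) (π d) e2 d1 d2 := fun d1 d2 h h1 h2 => lift d _ _ _ h k2 h1 h2
  obtain ⟨f1, hCG, g0, g1, g2, g3, g4, g5⟩ : ∃ f1 : E → ZMod 2, CG (π ∘ s) (π ∘ t) Set.univ f1 ∧
      f1 e0 = 0 ∧ f1 e1 = 0 ∧ f1 e2 = 0 ∧ f1 c1 = 1 ∧ f1 c2 = 1 ∧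
      ∀ d1 d2, star (π ∘ s) (π ∘ t) (π d) e2 d1 d2 → f1 d1 = 1 ∧ f1 d2 = 1 := by
    clear hstar lift ib ic p2 p3 hK hb hc hd hbc hbd hcd
    generalize π b = b at *
    generalize π c = c at *
    generalize π d = d at *
    generalize π ∘ s = s at *
    generalize π ∘ t = t at *
    set D : Set E := {e | s e ≠ b ∧ t e ≠ b} with hD
    have hDe : ∀ e, e ∉ D ↔ (e = e0 ∨ e = e1 ∨ e = e2) := by
      intro e; rw [← hb'.1 e, hD, Set.mem_ofPred_eq]; tauto
    have e0D := (hDe e0).2 (by simp)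
    have e1D := (hDe e1).2 (by simp)
    have e2D := (hDe e2).2 (by simp)
    have e1c : s e1 = c ∨ t e1 = c := (hc'.1 e1).2 (by simp)
    have e1b : s e1 = b ∨ t e1 = b := (hb'.1 e1).2 (by simp)
    have e2b : s e2 = b ∨ t e2 = b := (hb'.1 e2).2 (by simp)
    have hDc : ∀ R, (univ.filter (fun e => e ∈ D ∧ cr s t R e)).card ≠ 1 := by
      intro R h1
      obtain ⟨g, hg⟩ := Finset.card_eq_one.1 h1
      have hg' : ∀ e, (e ∈ D ∧ cr s t R e) ↔ e = g := by
        intro e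
        have : e ∈ univ.filter (fun e => e ∈ D ∧ cr s t R e) ↔ e ∈ ({g} : Finset E) := by rw [hg]
        simpa using this
      have hgg := (hg' g).2 rfl
      have m1 : ∀ e ∈ D, (e ∈ cut s t (R \ {b}) ↔ cr s t R e) := by
        intro e he; rw [mem_cut]; unfold cr
        simp only [Set.mem_sdiff, Set.mem_singleton_iff, he.1, he.2, not_false_eq_true, and_true]
      have m2 : ∀ e ∈ D, (e ∈ cut s t (R ∪ {b}) ↔ cr s t R e) := by
        intro e he; rw [mem_cut]; unfold cr
        simp only [Set.mem_union, Set.mem_singleton_iff, he.1, he.2, or_false]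
      have i1 : cut s t (R \ {b}) ∩ cut s t (R ∪ {b}) ⊆ {g} := by
        intro e he
        rw [Finset.mem_inter] at he
        by_cases heD : e ∈ D
        · rw [Finset.mem_singleton, ← hg']
          exact ⟨heD, (m1 e heD).1 he.1⟩
        · exfalso
          obtain ⟨h1, h2⟩ := he
          rw [mem_cut] at h1 h2
          unfold cr at h1 h2
          simp only [Set.mem_sdiff, Set.mem_union, Set.mem_singleton_iff] at h1 h2
          have : s e = b ∨ t e = b := by
            by_contra h; push Not at h; exact heD h
          clear * - h1 h2 this
          grind
      have i2 : cut s t (R \ {b}) ∪ cut s t (R ∪ {b}) ⊆ {g, e0, e1, e2} := by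
        intro e he
        by_cases heD : e ∈ D
        · have : cr s t R e := by
            rcases Finset.mem_union.1 he with h | h
            · exact (m1 e heD).1 h
            · exact (m2 e heD).1 h
          rw [(hg' e).1 ⟨heD, this⟩]; simp
        · rw [hDe] at heD
          rcases heD with rfl | rfl | rfl <;> simp
      have n1 := Finset.card_le_card i1
      have n2 := Finset.card_le_card i2
      have n3 := Finset.card_union_add_card_inter (cut s t (R \ {b})) (cut s t (R ∪ {b}))
      have n4 : ({g, e0, e1, e2} : Finset E).card ≤ 4 := Finset.card_le_four
      have n5 := p1 (R \ {b})
      have n6 := p1 (R ∪ {b})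
      have n7 := Finset.card_ne_zero.2 ⟨g, (m1 g hgg.1).2 hgg.2⟩
      have n8 := Finset.card_ne_zero.2 ⟨g, (m2 g hgg.1).2 hgg.2⟩
      simp only [Finset.card_singleton] at n1
      omega
    have hcon : con s t D c d := by
      intro R hcR hR
      by_contra hdR
      have m1 : e1 ∈ cut s t (R \ {b}) := by
        rw [mem_cut]; unfold cr
        simp only [Set.mem_sdiff, Set.mem_singleton_iff]
        rcases e1c with h | h <;> rcases e1b with h' | h'
        · exact absurd (h'.symm.trans h) hbc'
        · rw [h, h']; simp [hcR, hbc'.symm]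
        · rw [h, h']; simp [hcR, hbc'.symm]
        · exact absurd (h'.symm.trans h) hbc'
      have m2 : cut s t (R \ {b}) ⊆ {e0, e1} := by
        intro e he
        rw [mem_cut] at he; unfold cr at he
        simp only [Set.mem_sdiff, Set.mem_singleton_iff] at he
        have h1 : e ∉ D := by
          intro h; apply he
          simp [hR e h, h.1, h.2]
        have h2 : e ≠ e2 := by
          rintro rfl
          rcases hd' with h | h <;> rcases e2b with h' | h'
          · exact absurd (h'.symm.trans h) hbd'
          · rw [h, h'] at he; simp [hdR] at he
          · rw [h, h'] at he; simp [hdR] at he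
          · exact absurd (h'.symm.trans h) hbd'
        rw [hDe] at h1
        rcases h1 with rfl | rfl | rfl
        · simp
        · simp
        · exact absurd rfl h2
      have n1 := Finset.card_le_card m2
      have n2 : ({e0, e1} : Finset E).card ≤ 2 := Finset.card_le_two
      have n3 := Finset.card_ne_zero.2 ⟨e1, m1⟩
      have n4 := p1 (R \ {b})
      omega
    obtain ⟨Z, hZ0, hZD, hZc⟩ := menger s t D (fun R => by convert hDc R) hcon
    set W : Set V := {w | con s t {e | Z e ≠ 0} c w} with hW
    have hbW : b ∉ W := by
      intro h
      have := h {b}ᶜ (by simpa using hbc'.symm) (fun e he => by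
        have := hZD e he
        simp [this.1, this.2])
      simp at this
    have hcl : ∀ e, Z e ≠ 0 → (s e ∈ W ↔ t e ∈ W) := fun e he => con_closed s t _ c he
    set Z' : E → ZMod 2 := fun e => if s e ∈ W then Z e else 0 with hZ'
    have hZ'0 : bd s t Z' = 0 := by
      funext v
      rw [hZ', bd_restrict s t Z W hcl, hZ0]; simp
    have hZ'Z : ∀ e, Z' e ≠ 0 → Z e ≠ 0 ∧ s e ∈ W := by
      intro e he
      by_cases h1 : s e ∈ W
      · simp only [hZ', if_pos h1] at he; exact ⟨he, h1⟩
      · simp only [hZ', if_neg h1] at he; exact absurd rfl he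
    have hZ'W : ∀ e, Z' e ≠ 0 → e ∈ inn s t W := fun e he =>
      ⟨(hZ'Z e he).2, (hcl e (hZ'Z e he).1).1 (hZ'Z e he).2⟩
    have hZ'c : ∀ x ∈ W, ∀ y ∈ W, con s t {e | Z' e ≠ 0} x y := fun x hx y hy =>
      con_trans (con_symm (con_restrict Z hx)) (con_restrict Z hy)
    have hZ'D : ∀ e, e ∉ D → Z' e = 0 := by
      intro e he; by_contra h; exact he (hZD e (hZ'Z e h).1)
    have hcW : c ∈ W := con_refl _ _ _ _
    have hdW : d ∈ W := hZc
    have hone : ∀ v w x y z, star s t v x y z → x ∉ D → v ∈ W → w ∈ W → v ≠ w →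
        Z' y = 1 ∧ Z' z = 1 := by
      intro v w x y z hs hx hv hw hvw
      have h1 := star_sum hs hZ'0
      rw [hZ'D x hx, zero_add] at h1
      have h2 := add_eq_zero' h1
      have h3 : Z' y ≠ 0 := by
        intro h0
        have := hZ'c v hv w hw {v} rfl (fun e he => by
          have : ¬ (s e = v ∨ t e = v) := by
            rw [hs.1]
            rintro (rfl | rfl | rfl)
            · exact he (hZ'D _ hx)
            · exact he h0
            · exact he (h2 ▸ h0)
          push Not at this
          simp [this.1, this.2])
        exact hvw this.symm
      exact ⟨z2 h3, z2 (h2 ▸ h3)⟩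
    have s1 := step s t (CG_empty s t) (W := W) (Z := Z') (by simp) hZ'0 hZ'W hZ'c
      (Or.inr (by ext e; rw [mem_cut]; simp [cr]))
    rw [Set.empty_union, zero_add] at s1
    have bt : ∀ e v, v ∈ W → (s e = v ∨ t e = v) → (s e = b ∨ t e = b) → btw s t W {b} e := by
      intro e v hv h1 h2
      have hvb : v ≠ b := fun h => hbW (h ▸ hv)
      rcases h1 with h | h <;> rcases h2 with h' | h'
      · exact absurd (h.symm.trans h') hvb
      · exact Or.inl ⟨h ▸ hv, h'⟩
      · exact Or.inr ⟨h', h ▸ hv⟩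
      · exact absurd (h.symm.trans h') hvb
    have s2 := step s t s1 (W := {b}) (Z := 0) (by simpa using hbW) (bd_zero _ _) (by simp)
      (by intro x hx y hy
          rw [Set.mem_singleton_iff.1 hx, Set.mem_singleton_iff.1 hy]
          exact con_refl _ _ _ _)
      (Or.inl ⟨e1, e2, hb'.2.2.2.2.2.2, bt e1 c hcW e1c e1b, bt e2 d hdW hd' e2b⟩)
    rw [add_zero] at s2
    obtain ⟨f1, q1, q2⟩ := grow s t p1 _ _ _ rfl s2
    have agb : ∀ e, e ∉ D → f1 e = 0 := by
      intro e he
      rw [q2 e, hZ'D e he]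
      rw [hDe, ← hb'.1] at he
      rcases he with h | h
      · exact Or.inl (Or.inr h)
      · exact Or.inr (Or.inr h)
    have agW : ∀ v ∈ W, ∀ e, (s e = v ∨ t e = v) → f1 e = Z' e := by
      intro v hv e he
      refine q2 e ?_
      rcases he with h | h
      · exact Or.inl (Or.inl (h ▸ hv))
      · exact Or.inr (Or.inl (h ▸ hv))
    have tot : ∀ v w x y z, star s t v x y z → x ∉ D → v ∈ W → w ∈ W → v ≠ w →
        f1 y = 1 ∧ f1 z = 1 := by
      intro v w x y z hs hx hv hw hvw
      rw [agW v hv y ((hs.1 y).2 (by simp)), agW v hv z ((hs.1 z).2 (by simp))]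
      exact hone v w x y z hs hx hv hw hvw
    obtain ⟨r1, r2⟩ := tot c d e1 c1 c2 hc' e1D hcW hdW hcd'
    exact ⟨f1, q1, agb _ e0D, agb _ e1D, agb _ e2D, r1, r2,
      fun d1 d2 h => tot d c e2 d1 d2 h e2D hdW hcW hcd'.symm⟩
  obtain ⟨f', a1, a2, a3⟩ := CG_flow _ _ hCG
  obtain ⟨f, b1, b2, b3⟩ := p2 f' a1 a2
  have : ∀ e ∈ K, (f e).1 = f1 e := fun e he => by rw [b3 e he, a3 e]
  refine ⟨f, b1, b2, ?_, ?_, ?_, ?_, ?_, ?_⟩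
  · rw [this _ k0, g0]
  · rw [this _ k1, g1]
  · rw [this _ k2, g2]
  · rw [this _ k3, g3]
  · rw [this _ k4, g4]
  · intro d1 d2 h h1 h2
    rw [this _ h1, this _ h2]
    exact g5 d1 d2 (hstar d1 d2 h h1 h2)

end
end N7
namespace N7
section
open scoped Classical
open Finset
set_option linter.unusedSectionVars false
set_option linter.unusedSimpArgs false

variable {V E : Type*} [Fintype V] [Fintype E] {A : Type*} [AddCommGroup A] [Module (ZMod 2) A]

/-- `{g,h}` is a cut -/
def P2 (s t : E → V) (g h : E) : Prop := ∃ R : Set V, ∀ e, cr s t R e ↔ e = g ∨ e = h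

lemma P2_symm {s t : E → V} {g h : E} (H : P2 s t g h) : P2 s t h g := by
  obtain ⟨R, hR⟩ := H
  exact ⟨R, fun e => by rw [hR e, or_comm]⟩

lemma cr_symm (s t : E → V) (R S : Set V) (e : E) :
    cr s t (symmDiff R S) e ↔ ¬ (cr s t R e ↔ cr s t S e) := by
  unfold cr
  simp only [Set.mem_symmDiff]
  by_cases h1 : s e ∈ R <;> by_cases h2 : t e ∈ R <;> by_cases h3 : s e ∈ S <;>
    by_cases h4 : t e ∈ S <;> simp [h1, h2, h3, h4]

lemma no_bridge {s t : E → V} (hbr : ∀ R, (cut s t R).card ≠ 1) (R : Set V) (g : E)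
    (h : ∀ e, cr s t R e ↔ e = g) : False := by
  apply hbr R
  rw [Finset.card_eq_one]
  exact ⟨g, by ext e; rw [mem_cut, h]; simp⟩

lemma star_no {s t : E → V} (hbr : ∀ R, (cut s t R).card ≠ 1) {v : V} {x y z : E}
    (h : star s t v x y z) : ¬ P2 s t x y ∧ ¬ P2 s t x z ∧ ¬ P2 s t y z := by
  have h1 := star_cr h
  obtain ⟨_, _, _, _, hxy, hxz, hyz⟩ := h
  refine ⟨?_, ?_, ?_⟩
  · rintro ⟨R, hR⟩
    refine no_bridge hbr (symmDiff R {v}) z fun e => ?_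
    rw [cr_symm, hR, h1]; clear * - hxy hxz hyz; grind
  · rintro ⟨R, hR⟩
    refine no_bridge hbr (symmDiff R {v}) y fun e => ?_
    rw [cr_symm, hR, h1]; clear * - hxy hxz hyz; grind
  · rintro ⟨R, hR⟩
    refine no_bridge hbr (symmDiff R {v}) x fun e => ?_
    rw [cr_symm, hR, h1]; clear * - hxy hxz hyz; grind

lemma P2_flow {s t : E → V} {g h : E} (hgh : g = h ∨ P2 s t g h) {f : E → A}
    (hf : bd s t f = 0) : f g = f h := by
  by_cases hne : g = h
  · rw [hne]
  obtain ⟨R, hR⟩ := hgh.resolve_left hne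
  have := cut_sum s t f R
  have hc : cut s t R = {g, h} := by ext e; rw [mem_cut, hR]; simp
  rw [hc, Finset.sum_pair hne, hf] at this
  simp only [Pi.zero_apply, Finset.sum_const_zero] at this
  exact add_eq_zero' this.symm

lemma P2_cross {s t : E → V} {b d : V} {e0 e1 e2 d1 d2 : E} (hb : star s t b e0 e1 e2)
    (hd : star s t d e2 d1 d2) (h1 : e0 ≠ d1) (h2 : e0 ≠ d2) (h3 : e1 ≠ d1) (h4 : e1 ≠ d2) :
    P2 s t e1 d1 → P2 s t e0 d2 := by
  rintro ⟨R, hR⟩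
  have a1 := star_cr hb
  have a2 := star_cr hd
  obtain ⟨_, _, _, _, b1, b2, b3⟩ := hb
  obtain ⟨_, _, _, _, b4, b5, b6⟩ := hd
  refine ⟨symmDiff R (symmDiff {b} {d}), fun e => ?_⟩
  rw [cr_symm, cr_symm, hR, a1, a2]
  clear * - h1 h2 h3 h4 b1 b2 b3 b4 b5 b6
  grind

lemma star_swap {s t : E → V} {v : V} {x y z : E} (h : star s t v x y z) : star s t v x z y := by
  obtain ⟨h1, h2, h3, h4, h5, h6, h7⟩ := h
  exact ⟨fun e => by rw [h1]; tauto, h2, h4, h3, h6, h5, h7.symm⟩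

lemma star_rot {s t : E → V} {v : V} {x y z : E} (h : star s t v x y z) : star s t v y x z := by
  obtain ⟨h1, h2, h3, h4, h5, h6, h7⟩ := h
  exact ⟨fun e => by rw [h1]; tauto, h3, h2, h4, h5.symm, h7, h6⟩

lemma star_ends {s t : E → V} {v w u : V} {e : E} (h1 : s e = v ∨ t e = v) (h2 : s e = w ∨ t e = w)
    (h3 : s e = u ∨ t e = u) (h4 : v ≠ w) (h5 : v ≠ u) (h6 : w ≠ u) : False := by
  clear * - h1 h2 h3 h4 h5 h6
  grind

set_option maxHeartbeats 1000000 in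
theorem special (s t : E → V) (hbr : ∀ R, (cut s t R).card ≠ 1)
    {b c d : V} {e0 e1 e2 c1 c2 d1 d2 : E} (hb : star s t b e0 e1 e2) (hc : star s t c e1 c1 c2)
    (hd : star s t d e2 d1 d2) (hbc : b ≠ c) (hbd : b ≠ d) (hcd : c ≠ d)
    (n1 : e0 ≠ c1) (n2 : e0 ≠ c2) (n3 : e0 ≠ d1) (n4 : e0 ≠ d2)
    (q1 : ¬ P2 s t e0 c1) (q2 : ¬ P2 s t e0 c2) (q3 : ¬ P2 s t e0 d1) (q4 : ¬ P2 s t e0 d2) :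
    ∃ f : E → A8, bd s t f = 0 ∧ (∀ e, f e ≠ 0) ∧ (f e0).1 = 0 ∧ (f e1).1 = 0 ∧ (f e2).1 = 0 ∧
      (f c1).1 = 1 ∧ (f c2).1 = 1 ∧ (f d1).1 = 1 ∧ (f d2).1 = 1 := by
  have ib : ∀ e, e = e0 ∨ e = e1 ∨ e = e2 → s e = b ∨ t e = b := fun e => (hb.1 e).2
  have ic : ∀ e, e = e1 ∨ e = c1 ∨ e = c2 → s e = c ∨ t e = c := fun e => (hc.1 e).2
  have id' : ∀ e, e = e2 ∨ e = d1 ∨ e = d2 → s e = d ∨ t e = d := fun e => (hd.1 e).2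
  have m1 : e2 ≠ c1 := fun h => star_ends (ib e2 (by simp)) (ic e2 (by simp [h])) (id' e2 (by simp))
    hbc hbd hcd
  have m2 : e2 ≠ c2 := fun h => star_ends (ib e2 (by simp)) (ic e2 (by simp [h])) (id' e2 (by simp))
    hbc hbd hcd
  have m3 : e1 ≠ d1 := fun h => star_ends (ib e1 (by simp)) (ic e1 (by simp)) (id' e1 (by simp [h]))
    hbc hbd hcd
  have m4 : e1 ≠ d2 := fun h => star_ends (ib e1 (by simp)) (ic e1 (by simp)) (id' e1 (by simp [h]))
    hbc hbd hcd
  obtain ⟨r1, r2, r3⟩ := star_no hbr hb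
  obtain ⟨r4, r5, r6⟩ := star_no hbr hc
  obtain ⟨r7, r8, r9⟩ := star_no hbr hd
  have x1 : ¬ P2 s t e1 d1 := fun h => q4 (P2_cross hb hd n3 n4 m3 m4 h)
  have x2 : ¬ P2 s t e1 d2 := fun h => q3 (P2_cross hb (star_swap hd) n4 n3 m4 m3 h)
  have x3 : ¬ P2 s t e2 c1 := fun h => q2 (P2_cross (star_swap hb) hc n1 n2 m1 m2 h)
  have x4 : ¬ P2 s t e2 c2 := fun h => q1 (P2_cross (star_swap hb) (star_swap hc) n2 n1 m2 m1 h)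
  have toP2 : ∀ R g h, cut s t R = {g, h} → P2 s t g h := fun R g h hc =>
    ⟨R, fun e => by rw [← mem_cut, hc]; simp⟩
  by_cases hcase : ∃ x y, (x = c1 ∨ x = c2) ∧ (y = d1 ∨ y = d2) ∧ (x = y ∨ P2 s t x y)
  · obtain ⟨x, y, hx, hy, hxy⟩ := hcase
    obtain ⟨f, a1, a2, a3, a4, a5, a6, a7, _⟩ := spec_core s t
      {e | e = e0 ∨ e = e1 ∨ e = e2 ∨ e = c1 ∨ e = c2} hbr (by
        intro R g h hg hh hne hcut
        have hP := toP2 R g h hcut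
        have hP' := P2_symm hP
        clear hcut hxy
        rcases hg with rfl | rfl | rfl | rfl | rfl <;> rcases hh with rfl | rfl | rfl | rfl | rfl <;>
        first
        | exact hne rfl
        | exact absurd hP (by assumption)
        | exact absurd hP' (by assumption)) hb hc (id' e2 (by simp)) hbc hbd hcd (by simp) (by simp)
        (by simp) (by simp) (by simp)
    have hf := P2_flow hxy a1
    have hy1 : (f y).1 = 1 := by
      rw [← hf]
      rcases hx with rfl | rfl <;> assumption
    have hsum := congrArg Prod.fst (star_sum hd a1)
    simp only [Prod.fst_add, a5, zero_add, Prod.fst_zero] at hsum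
    have hsum := add_eq_zero' hsum
    refine ⟨f, a1, a2, a3, a4, a5, a6, a7, ?_, ?_⟩
    · rcases hy with rfl | rfl
      · exact hy1
      · rw [hsum, hy1]
    · rcases hy with rfl | rfl
      · rw [← hsum, hy1]
      · exact hy1
  · have y1 : ¬ P2 s t c1 d1 := fun h => hcase ⟨c1, d1, by simp, by simp, Or.inr h⟩
    have y2 : ¬ P2 s t c1 d2 := fun h => hcase ⟨c1, d2, by simp, by simp, Or.inr h⟩
    have y3 : ¬ P2 s t c2 d1 := fun h => hcase ⟨c2, d1, by simp, by simp, Or.inr h⟩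
    have y4 : ¬ P2 s t c2 d2 := fun h => hcase ⟨c2, d2, by simp, by simp, Or.inr h⟩
    obtain ⟨f, a1, a2, a3, a4, a5, a6, a7, a8⟩ := spec_core s t
      {e | e = e0 ∨ e = e1 ∨ e = e2 ∨ e = c1 ∨ e = c2 ∨ e = d1 ∨ e = d2} hbr (by
        intro R g h hg hh hne hcut
        have hP := toP2 R g h hcut
        have hP' := P2_symm hP
        clear hcut hcase
        rcases hg with rfl | rfl | rfl | rfl | rfl | rfl | rfl <;>
        rcases hh with rfl | rfl | rfl | rfl | rfl | rfl | rfl <;>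
        first
        | exact hne rfl
        | exact absurd hP (by assumption)
        | exact absurd hP' (by assumption)) hb hc (id' e2 (by simp)) hbc hbd hcd (by simp) (by simp)
        (by simp) (by simp) (by simp)
    obtain ⟨b1, b2⟩ := a8 d1 d2 hd (by simp) (by simp)
    exact ⟨f, a1, a2, a3, a4, a5, a6, a7, b1, b2⟩

end
end N7
namespace N7
section
open Finset

/-- poor or rich -/
def nrm (X Y : Finset A8) : Prop := (X ∪ Y).card = 3 ∨ (X ∪ Y).card = 5

instance (X Y : Finset A8) : Decidable (nrm X Y) := by unfold nrm; infer_instance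

/-- a proper triple -/
def good3 (X : Finset A8) : Prop := X.card = 3 ∧ (0 : A8) ∉ X

instance (X : Finset A8) : Decidable (good3 X) := by unfold good3; infer_instance

/-- `X` is a line through `a` -/
def line (a : A8) (X : Finset A8) : Prop := a ≠ 0 ∧ ∃ b, b ≠ 0 ∧ b ≠ a ∧ X = {a, b, a + b}

lemma nrm_symm {X Y : Finset A8} (h : nrm X Y) : nrm Y X := by
  unfold nrm at *; rwa [Finset.union_comm]

lemma dec1 : ∀ a b c : A8, a ≠ 0 → b ≠ 0 → b ≠ a → c ≠ 0 → c ≠ a →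
    nrm {a, b, a + b} {a, c, a + c} := by decide +kernel

lemma dec2 : ∀ a b : A8, a ≠ 0 → b ≠ 0 → b ≠ a → good3 {a, b, a + b} := by decide +kernel

lemma dec3 : ∀ a b c d : B4, a ≠ 0 → b ≠ 0 → a ≠ b →
    ∃ y : A8, y ≠ 0 ∧ y ≠ (0, a) ∧ good3 {y, (0, b), (0, a + b)} ∧
      nrm {y, (0, b), (0, a + b)} {(0, b), (1, c), (1, b + c)} ∧
      nrm {y, (0, b), (0, a + b)} {(0, a + b), (1, d), (1, a + b + d)} ∧
      nrm {y, (0, b), (0, a + b)} {y, (0, a), y + (0, a)} := by decide +kernel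

/-- small combination -/
def cmb (x p r v : A8) : A8 :=
  (if v.1 = 1 then x else 0) + (if v.2.1 = 1 then p else 0) + (if v.2.2 = 1 then r else 0)

/-- independence -/
def ind (x p r : A8) : Prop := ∀ v : A8, cmb x p r v = 0 → v = 0

instance (x p r : A8) : Decidable (ind x p r) := by unfold ind; infer_instance

lemma dec4 : ∀ x p : A8, x ≠ 0 → p ≠ 0 → x ≠ p → ∃ r : A8, ind x p r := by decide +kernel

lemma cmb1 (x p r v : A8) : cmb x p r v = v.1 • x + v.2.1 • p + v.2.2 • r := by
  have h : ∀ a : ZMod 2, ∀ y : A8, (if a = 1 then y else 0) = a • y := by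
    intro a y
    by_cases h : a = 0
    · subst h; simp
    · rw [z2 h]; simp
  unfold cmb
  rw [h, h, h]

lemma nrm_line {a : A8} {X Y : Finset A8} (hX : line a X) (hY : line a Y) : nrm X Y := by
  obtain ⟨h0, b, hb, hba, rfl⟩ := hX
  obtain ⟨_, c, hc, hca, rfl⟩ := hY
  exact dec1 a b c h0 hb hba hc hca

lemma good_line {a : A8} {X : Finset A8} (hX : line a X) : good3 X := by
  obtain ⟨h0, b, hb, hba, rfl⟩ := hX
  exact dec2 a b h0 hb hba

lemma exM (x p : A8) (hx : x ≠ 0) (hp : p ≠ 0) (hxp : x ≠ p) :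
    ∃ M : A8 →+ A8, Function.Injective M ∧ M (1, 0, 0) = x ∧ M (0, 1, 0) = p := by
  obtain ⟨r, hr⟩ := dec4 x p hx hp hxp
  refine ⟨⟨⟨fun v => v.1 • x + v.2.1 • p + v.2.2 • r, by simp⟩, ?_⟩, ?_, ?_, ?_⟩
  · intro v w
    simp only [Prod.fst_add, Prod.snd_add, add_smul]
    abel
  · rw [injective_iff_map_eq_zero]
    intro v hv
    refine hr v ?_
    rw [cmb1]; exact hv
  · simp
  · simp

lemma exg (x y : A8) (hx : x ≠ 0) (hy : y ≠ 0) :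
    ∃ g : A8 →+ A8, Function.Injective g ∧ g x = y := by
  have : ∀ x : A8, ∃ p : A8, p ≠ 0 ∧ x ≠ p := by decide
  obtain ⟨p, hp, hxp⟩ := this x
  obtain ⟨q, hq, hyq⟩ := this y
  obtain ⟨M, M1, M2, _⟩ := exM x p hx hp hxp
  obtain ⟨N, N1, N2, _⟩ := exM y q hy hq hyq
  have hb : Function.Bijective M := Finite.injective_iff_bijective.1 M1
  let M' := AddEquiv.ofBijective M hb
  refine ⟨N.comp M'.symm.toAddMonoidHom, N1.comp M'.symm.injective, ?_⟩
  have : M'.symm x = (1, 0, 0) := by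
    rw [AddEquiv.symm_apply_eq]; exact M2.symm
  simp [this, N2]

end

section
open scoped Classical
open Finset
set_option linter.unusedSectionVars false
set_option linter.unusedSimpArgs false

variable {V E : Type*} [Fintype V] [Fintype E] {A : Type*} [AddCommGroup A] [Module (ZMod 2) A]

/-- incidence -/
def inc (s t : E → V) (e : E) (v : V) : Prop := s e = v ∨ t e = v

/-- color set -/
noncomputable def S (s t : E → V) (col : E → A8) (v : V) : Finset A8 :=
  (univ.filter (fun e => inc s t e v)).image col

lemma S_star {s t : E → V} {v : V} {x y z : E} (h : star s t v x y z) (col : E → A8) :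
    S s t col v = {col x, col y, col z} := by
  have : univ.filter (fun e => inc s t e v) = {x, y, z} := by
    ext e; rw [Finset.mem_filter_univ]; unfold inc; rw [h.1]; simp
  unfold S
  rw [this]; simp

lemma S_congr {s t : E → V} {v : V} {col col' : E → A8} (h : ∀ e, inc s t e v → col e = col' e) :
    S s t col v = S s t col' v := by
  unfold S
  refine Finset.image_congr ?_
  intro e he
  exact h e (by simpa using he)

lemma star_at {s t : E → V} {v : V} {x y z e : E} (h : star s t v x y z) (he : inc s t e v) :
    ∃ y' z', star s t v e y' z' := by
  rcases (h.1 e).1 he with rfl | rfl | rfl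
  · exact ⟨_, _, h⟩
  · exact ⟨_, _, star_rot h⟩
  · exact ⟨_, _, star_rot (star_swap h)⟩

lemma star_inc {s t : E → V} {v : V} {x y z : E} (h : star s t v x y z) :
    inc s t x v ∧ inc s t y v ∧ inc s t z v :=
  ⟨(h.1 x).2 (by simp), (h.1 y).2 (by simp), (h.1 z).2 (by simp)⟩

lemma flow_line {s t : E → V} {v : V} {x y z : E} (h : star s t v x y z) {f : E → A8}
    (hf : bd s t f = 0) (hnz : ∀ e, f e ≠ 0) : line (f x) (S s t f v) := by
  have h1 := star_sum h hf
  have h2 : f z = f x + f y := (add_eq_zero' h1).symm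
  refine ⟨hnz x, f y, hnz y, ?_, ?_⟩
  · intro h3
    rw [h3, aa] at h2
    exact hnz z h2
  · rw [S_star h, h2]

lemma bd_comp (s t : E → V) (f : E → A8) (g : A8 →+ A8) (hf : bd s t f = 0) :
    bd s t (fun e => g (f e)) = 0 := by
  funext v
  have : bd s t (fun e => g (f e)) v = g (bd s t f v) := by
    simp only [bd, map_sum, map_add, apply_ite g, map_zero]
  rw [this, hf]; simp

lemma inc_cases {s t : E → V} {e : E} {v w u : V} (h1 : inc s t e v) (h2 : inc s t e w)
    (h3 : inc s t e u) (h4 : v ≠ w) (h5 : v ≠ u) : w = u := by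
  by_contra h
  exact star_ends h1 h2 h3 h4 h5 h

lemma cr_inc {s t : E → V} {T : Set V} {e : E} {v w : V} (h1 : inc s t e v) (h2 : inc s t e w)
    (hv : v ∈ T) (hw : w ∉ T) : cr s t T e := by
  unfold cr
  rcases h1 with rfl | rfl <;> rcases h2 with rfl | rfl <;> tauto

lemma cr_inc' {s t : E → V} {T : Set V} {e : E} {v w : V} (h1 : inc s t e v) (h2 : inc s t e w)
    (hcr : cr s t T e) (hv : v ∈ T) (hne : v ≠ w) : w ∉ T := by
  intro hw
  unfold cr at hcr
  rcases h1 with rfl | rfl <;> rcases h2 with rfl | rfl <;> tauto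

lemma cr_end {s t : E → V} {T : Set V} {e : E} (hcr : cr s t T e) : ∃ v ∈ T, inc s t e v := by
  unfold cr at hcr
  by_cases h : s e ∈ T
  · exact ⟨_, h, Or.inl rfl⟩
  · refine ⟨_, ?_, Or.inr rfl⟩
    by_contra h'; tauto

lemma other_end {s t : E → V} {e : E} {v : V} (h : inc s t e v) (hl : s e ≠ t e) :
    ∃ w, w ≠ v ∧ inc s t e w := by
  rcases h with rfl | rfl
  · exact ⟨_, hl.symm, Or.inr rfl⟩
  · exact ⟨_, hl, Or.inl rfl⟩

/-- valid coloring of `R` with the virtual pendant closing -/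
def okc (s t : E → V) (col : E → A8) (R : Set V) (h1 h2 : E) : Prop :=
  (∀ v ∈ R, good3 (S s t col v)) ∧
  (∀ e v w, v ∈ R → w ∈ R → v ≠ w → inc s t e v → inc s t e w →
    nrm (S s t col v) (S s t col w)) ∧
  col h1 ≠ col h2 ∧ col h1 ≠ 0 ∧ col h2 ≠ 0 ∧
  ∀ v ∈ R, inc s t h1 v ∨ inc s t h2 v → nrm (S s t col v) {col h1, col h2, col h1 + col h2}

end
end N7
namespace N7
section
open scoped Classical
open Finset
set_option linter.unusedSectionVars false
set_option linter.unusedSimpArgs false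

variable {V E : Type*} [Fintype V] [Fintype E] {A : Type*} [AddCommGroup A] [Module (ZMod 2) A]

lemma set_swap (x y : A8) : ({y, x, y + x} : Finset A8) = {x, y, x + y} := by
  rw [Finset.insert_comm, add_comm]

lemma claim_good (s t : E → V) (hbr : ∀ R, (cut s t R).card ≠ 1) {R : Set V} {h1 h2 : E}
    (hcut : ∀ e, cr s t R e ↔ e = h1 ∨ e = h2) (hh : h1 ≠ h2)
    (hst : ∀ v ∈ R, ∃ x y z, star s t v x y z)
    {b c d : V} {e1 e2 c1 c2 d1 d2 : E} (hb : star s t b h1 e1 e2) (hc : star s t c e1 c1 c2)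
    (hd : star s t d e2 d1 d2) (hbR : b ∈ R) (hcR : c ∈ R) (hdR : d ∈ R)
    (hbc : b ≠ c) (hbd : b ≠ d) (hcd : c ≠ d)
    (q1 : ¬ P2 s t h1 c1) (q2 : ¬ P2 s t h1 c2) (q3 : ¬ P2 s t h1 d1) (q4 : ¬ P2 s t h1 d2) :
    ∃ col, okc s t col R h1 h2 := by
  obtain ⟨ib0, ib1, ib2⟩ := star_inc hb
  obtain ⟨ic0, ic1, ic2⟩ := star_inc hc
  obtain ⟨id0, id1, id2⟩ := star_inc hd
  have hR1 : ∀ v ∈ R, inc s t h1 v → v = b := by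
    intro v hv hi
    by_contra hne
    exact cr_inc' ib0 hi ((hcut h1).2 (Or.inl rfl)) hbR (Ne.symm hne) hv
  have n1 : h1 ≠ c1 := by rintro rfl; exact hbc (hR1 c hcR ic1).symm
  have n2 : h1 ≠ c2 := by rintro rfl; exact hbc (hR1 c hcR ic2).symm
  have n3 : h1 ≠ d1 := by rintro rfl; exact hbd (hR1 d hdR id1).symm
  have n4 : h1 ≠ d2 := by rintro rfl; exact hbd (hR1 d hdR id2).symm
  obtain ⟨f, hf, hnz, z0, z1, z2', w1, w2, w3, w4⟩ :=
    special s t hbr hb hc hd hbc hbd hcd n1 n2 n3 n4 q1 q2 q3 q4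
  have hx2 : f h1 = f h2 := P2_flow (Or.inr ⟨R, hcut⟩) hf
  have e0' : f h1 = (0, (f h1).2) := Prod.ext z0 rfl
  have e1' : f e1 = (0, (f e1).2) := Prod.ext z1 rfl
  have e2' : f e2 = (0, (f h1).2 + (f e1).2) := by
    rw [← add_eq_zero' (star_sum hb hf)]; exact Prod.ext (by simp [z0, z1]) rfl
  have c1' : f c1 = (1, (f c1).2) := Prod.ext w1 rfl
  have c2' : f c2 = (1, (f e1).2 + (f c1).2) := by
    rw [← add_eq_zero' (star_sum hc hf)]; exact Prod.ext (by simp [z1, w1]) rfl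
  have d1' : f d1 = (1, (f d1).2) := Prod.ext w3 rfl
  have d2' : f d2 = (1, (f h1).2 + (f e1).2 + (f d1).2) := by
    rw [← add_eq_zero' (star_sum hd hf)]
    exact Prod.ext (by simp [z2', w3]) (by simp [e2'])
  have k1 : (f h1).2 ≠ 0 := fun h => hnz h1 (by rw [e0', h]; rfl)
  have k2 : (f e1).2 ≠ 0 := fun h => hnz e1 (by rw [e1', h]; rfl)
  have k3 : (f h1).2 ≠ (f e1).2 := fun h => hnz e2 (by rw [e2', h, aa]; rfl)
  obtain ⟨y, y0, yx, yg, y1, y2, y3⟩ := dec3 _ _ (f c1).2 (f d1).2 k1 k2 k3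
  rw [← e0', ← e1', ← e2'] at *
  rw [← c1', ← c2'] at y1
  rw [← d1', ← d2'] at y2
  have hSr : S s t (fun e => if e = h1 then y else f e) b = {y, f e1, f e2} := by
    rw [S_star hb]
    simp [hb.2.2.2.2.1.symm, hb.2.2.2.2.2.1.symm]
  have hS : ∀ v ∈ R, v ≠ b → S s t (fun e => if e = h1 then y else f e) v = S s t f v := by
    intro v hv hne
    apply S_congr
    intro e he
    rw [if_neg]
    rintro rfl
    exact hne (hR1 v hv he)
  have hbn : ∀ e w, w ∈ R → b ≠ w → inc s t e b → inc s t e w →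
      nrm {y, f e1, f e2} (S s t f w) := by
    intro e w hw hne hi1 hi2
    rcases (hb.1 e).1 hi1 with rfl | rfl | rfl
    · exact absurd (hR1 w hw hi2).symm hne
    · have : c = w := inc_cases ib1 ic0 hi2 hbc hne
      subst this
      rw [S_star hc]; exact y1
    · have : d = w := inc_cases ib2 id0 hi2 hbd hne
      subst this
      rw [S_star hd]; exact y2
  have hln : ∀ e v, v ∈ R → inc s t e v → line (f e) (S s t f v) := by
    intro e v hv hi
    obtain ⟨_, _, _, h⟩ := hst v hv
    obtain ⟨_, _, h'⟩ := star_at h hi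
    exact flow_line h' hf hnz
  refine ⟨fun e => if e = h1 then y else f e, ?_, ?_, ?_, ?_, ?_, ?_⟩
  · intro v hv
    by_cases h : v = b
    · subst h; rw [hSr]; exact yg
    · rw [hS v hv h]
      obtain ⟨x, _, _, h'⟩ := hst v hv
      exact good_line (hln x v hv (star_inc h').1)
  · intro e v w hv hw hne hi1 hi2
    by_cases h : v = b
    · subst h
      rw [hSr, hS w hw hne.symm]; exact hbn e w hw hne hi1 hi2
    by_cases h' : w = b
    · subst h'
      rw [hSr, hS v hv h]; exact nrm_symm (hbn e v hv hne.symm hi2 hi1)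
    rw [hS v hv h, hS w hw h']
    exact nrm_line (hln e v hv hi1) (hln e w hw hi2)
  · simp [hh.symm, ← hx2, yx]
  · simp [y0]
  · simp [hh.symm, hnz]
  · intro v hv hi
    simp only [if_true, hh.symm, if_false, ← hx2]
    by_cases h : v = b
    · subst h; rw [hSr]; exact y3
    · rw [hS v hv h]
      rcases hi with hi | hi
      · exact absurd (hR1 v hv hi) h
      · have := hln h2 v hv hi
        rw [← hx2] at this
        refine nrm_line this ⟨hnz h1, y, y0, yx, set_swap _ _⟩

lemma get_T (s t : E → V) (hbr : ∀ R, (cut s t R).card ≠ 1) {R : Set V} {h1 h2 g : E}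
    (hcut : ∀ e, cr s t R e ↔ e = h1 ∨ e = h2) (hh : h1 ≠ h2)
    {b c : V} {e1 e2 c' : E} (hb : star s t b h1 e1 e2) (hc : star s t c e1 g c')
    (hbR : b ∈ R) (hcR : c ∈ R) (hbc : b ≠ c) (hg1 : g ≠ h1)
    (q1 : P2 s t h1 g) : ∃ T ⊆ R, b ∈ T ∧ ∀ e, cr s t T e ↔ e = h1 ∨ e = g := by
  by_cases hg : g = h2
  · subst hg; exact ⟨R, subset_rfl, hbR, hcut⟩
  have : ∃ T0 : Set V, b ∈ T0 ∧ ∀ e, cr s t T0 e ↔ e = h1 ∨ e = g := by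
    obtain ⟨T, hT⟩ := q1
    by_cases h : b ∈ T
    · exact ⟨T, h, hT⟩
    · refine ⟨Tᶜ, h, fun e => ?_⟩
      rw [← hT]; unfold cr; simp only [Set.mem_compl_iff]; tauto
  obtain ⟨T0, hbT, hT⟩ := this
  obtain ⟨ib0, ib1, ib2⟩ := star_inc hb
  obtain ⟨ic0, ic1, ic2⟩ := star_inc hc
  have key : ∀ e, e ≠ h1 → e ≠ g → e ≠ h2 → (s e ∈ R ↔ t e ∈ R) ∧ (s e ∈ T0 ↔ t e ∈ T0) := by
    intro e a1 a2 a3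
    have h1 := hcut e
    have h2 := hT e
    unfold cr at h1 h2
    clear * - h1 h2 a1 a2 a3
    grind
  have k1 : ¬ (s h1 ∈ R ↔ t h1 ∈ R) := (hcut h1).2 (Or.inl rfl)
  have k2 : ¬ (s h1 ∈ T0 ↔ t h1 ∈ T0) := (hT h1).2 (Or.inl rfl)
  have k3 : (s g ∈ R ↔ t g ∈ R) := by
    by_contra h; rcases (hcut g).1 h with h | h <;> contradiction
  have k4 : ¬ (s g ∈ T0 ↔ t g ∈ T0) := (hT g).2 (Or.inr rfl)
  have k5 : ¬ (s h2 ∈ R ↔ t h2 ∈ R) := (hcut h2).2 (Or.inr rfl)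
  have k6 : (s h2 ∈ T0 ↔ t h2 ∈ T0) := by
    by_contra h; rcases (hT h2).1 h with h | h
    · exact hh h.symm
    · exact hg h.symm
  have k7 : s h1 ∈ R ∧ s h1 ∈ T0 ∨ t h1 ∈ R ∧ t h1 ∈ T0 := by
    rcases ib0 with h | h <;> rw [h] <;> simp [hbR, hbT]
  have k8 : s g ∈ R ∨ t g ∈ R := by
    rcases ic1 with h | h <;> rw [h] <;> simp [hcR]
  by_cases hs : s h2 ∈ T0
  · exfalso
    refine no_bridge hbr (R \ T0) g (fun e => ?_)
    unfold cr
    simp only [Set.mem_sdiff]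
    have := key e
    clear * - this k1 k2 k3 k4 k5 k6 k7 k8 hs hg1 hg
    by_cases h : e = h1
    · subst h; grind
    by_cases h : e = h2
    · subst h; grind
    by_cases h : e = g
    · subst h; grind
    grind
  · refine ⟨R ∩ T0, Set.inter_subset_left, ⟨hbR, hbT⟩, fun e => ?_⟩
    unfold cr
    simp only [Set.mem_inter_iff]
    have := key e
    clear * - this k1 k2 k3 k4 k5 k6 k7 k8 hs hg1 hg hh
    by_cases h : e = h1
    · subst h; grind
    by_cases h : e = h2
    · subst h; grind
    by_cases h : e = g
    · subst h; grind
    grind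

end
end N7
namespace N7
section
open scoped Classical
open Finset
set_option linter.unusedSectionVars false
set_option linter.unusedSimpArgs false

variable {V E : Type*} [Fintype V] [Fintype E] {A : Type*} [AddCommGroup A] [Module (ZMod 2) A]

lemma line_self {x y : A8} (hx : x ≠ 0) (hy : y ≠ 0) (hyx : y ≠ x) : line x {x, y, x + y} :=
  ⟨hx, y, hy, hyx, rfl⟩

lemma claim_bad (s t : E → V) (hbr : ∀ R, (cut s t R).card ≠ 1) {R : Set V} {h1 h2 g : E}
    (hcut : ∀ e, cr s t R e ↔ e = h1 ∨ e = h2) (hh : h1 ≠ h2)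
    (hst : ∀ v ∈ R, ∃ x y z, star s t v x y z)
    {b c : V} {e1 e2 c' : E} (hb : star s t b h1 e1 e2) (hc : star s t c e1 g c')
    (hbR : b ∈ R) (hcR : c ∈ R) (hbc : b ≠ c) (hec : e2 ≠ c')
    (q1 : P2 s t h1 g)
    (IH : ∀ D ⊆ R, b ∉ D → ∀ k1 k2, k1 ≠ k2 → (∀ e, cr s t D e ↔ e = k1 ∨ e = k2) →
      ∃ col, okc s t col D k1 k2) :
    ∃ col, okc s t col R h1 h2 := by
  obtain ⟨ib0, ib1, ib2⟩ := star_inc hb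
  obtain ⟨ic0, ic1, ic2⟩ := star_inc hc
  have hR1 : ∀ v ∈ R, inc s t h1 v → v = b := by
    intro v hv hi
    by_contra hne
    exact cr_inc' ib0 hi ((hcut h1).2 (Or.inl rfl)) hbR (Ne.symm hne) hv
  have hg1 : g ≠ h1 := by rintro rfl; exact hbc (hR1 c hcR ic1).symm
  have hc1 : c' ≠ h1 := by rintro rfl; exact hbc (hR1 c hcR ic2).symm
  obtain ⟨T, hTR, hbT, hT⟩ := get_T s t hbr hcut hh hb hc hbR hcR hbc hg1 q1
  have hge2 : g ≠ e2 := by rintro rfl; exact (star_no hbr hb).2.1 q1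
  have b1 := hb.2.2.2.2.1
  have b2 := hb.2.2.2.2.2.1
  have b3 := hb.2.2.2.2.2.2
  have p1 := hc.2.2.2.2.1
  have p2 := hc.2.2.2.2.2.1
  have p3 := hc.2.2.2.2.2.2
  have hcT : c ∈ T := by
    by_contra h
    rcases (hT e1).1 (cr_inc ib1 ic0 hbT h) with h | h
    · exact b1 h.symm
    · exact p1 h
  let D : Set V := {v | v ∈ T ∧ v ≠ b ∧ v ≠ c}
  have hDm : ∀ v, v ∈ D ↔ v ∈ T ∧ v ≠ b ∧ v ≠ c := fun v => Iff.rfl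
  have hDs : D = symmDiff T (symmDiff {b} {c}) := by
    ext v
    rw [hDm]
    simp only [Set.mem_symmDiff, Set.mem_singleton_iff]
    clear * - hbT hcT hbc
    grind
  have hDc : ∀ e, cr s t D e ↔ e = e2 ∨ e = c' := by
    intro e
    rw [hDs, cr_symm, cr_symm, hT, star_cr hb, star_cr hc]
    clear * - hec hg1 hc1 hge2 b1 b2 b3 p1 p2 p3
    grind
  obtain ⟨col0, o1, o2, o3, o4, o5, o6⟩ := IH D (fun v hv => hTR hv.1) (fun h => h.2.1 rfl)
    e2 c' hec hDc
  obtain ⟨f, hf, hnz⟩ := flow8 s t hbr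
  obtain ⟨M, hM, hMx⟩ := exg (f h1) (col0 e2) (hnz h1) o4
  set x := col0 e2 with hxdef
  set y := col0 c' with hydef
  have hxy : x + y ≠ 0 := fun h => o3 (add_eq_zero' h)
  have hF := bd_comp s t f M hf
  have hFnz : ∀ e, M (f e) ≠ 0 := fun e h => hnz e (hM (by rw [h, map_zero]))
  set F : E → A8 := fun e => M (f e) with hFdef
  have hF1 : F h1 = x := hMx
  have hFg : F g = x := by rw [← hF1]; exact (P2_flow (Or.inr q1) hF).symm
  have hF2 : F h2 = x := by rw [← hF1]; exact (P2_flow (Or.inr ⟨R, hcut⟩) hF).symm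
  -- geometry
  have tD : ∀ e, (s e ∈ D ∨ t e ∈ D) ↔ ∃ v ∈ D, inc s t e v := by
    intro e
    constructor
    · rintro (h | h)
      · exact ⟨_, h, Or.inl rfl⟩
      · exact ⟨_, h, Or.inr rfl⟩
    · rintro ⟨v, hv, rfl | rfl⟩
      · exact Or.inl hv
      · exact Or.inr hv
  have gT : ∀ v ∈ T, inc s t g v → v = c := by
    intro v hv hi
    by_contra hne
    exact cr_inc' ic1 hi ((hT g).2 (Or.inr rfl)) hcT (Ne.symm hne) hv
  have e1D : ∀ v, inc s t e1 v → v = b ∨ v = c := by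
    intro v hi
    by_contra hne
    push Not at hne
    exact star_ends ib1 ic0 hi hbc hne.1.symm hne.2.symm
  have h1D : ∀ v ∈ D, ¬ inc s t h1 v := fun v hv hi => hv.2.1 (hR1 v (hTR hv.1) hi)
  have gD : ∀ v ∈ D, ¬ inc s t g v := fun v hv hi => hv.2.2 (gT v hv.1 hi)
  have e1D' : ∀ v ∈ D, ¬ inc s t e1 v := fun v hv hi => by
    rcases e1D v hi with h | h
    · exact hv.2.1 h
    · exact hv.2.2 h
  have h2T : h2 ≠ g → ∀ v ∈ R, inc s t h2 v → v ∉ T := by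
    intro hne v hv hi hvT
    have hl : s h2 ≠ t h2 := by
      intro h
      have := (hcut h2).2 (Or.inr rfl)
      unfold cr at this
      rw [h] at this; exact this Iff.rfl
    obtain ⟨w, hw, hwi⟩ := other_end hi hl
    have hwR := cr_inc' hi hwi ((hcut h2).2 (Or.inr rfl)) hv hw.symm
    rcases (hT h2).1 (cr_inc hi hwi hvT (fun h => hwR (hTR h))) with h | h
    · exact hh h.symm
    · exact hne h
  have h2D : h2 ≠ g → ¬ (s h2 ∈ D ∨ t h2 ∈ D) := by
    intro hne h
    obtain ⟨v, hv, hi⟩ := (tD h2).1 h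
    exact h2T hne v (hTR hv.1) hi hv.1
  let col : E → A8 := fun e => if e = e1 then x + y else if e = h1 then y else if e = g then x
    else if s e ∈ D ∨ t e ∈ D then col0 e else F e
  have ce1 : col e1 = x + y := by simp [col]
  have ch1 : col h1 = y := by simp [col, b1]
  have cg : col g = x := by simp [col, p1.symm, hg1]
  have ce2 : col e2 = x := by
    have : s e2 ∈ D ∨ t e2 ∈ D := by
      obtain ⟨v, hv, hi⟩ := cr_end ((hDc e2).2 (Or.inl rfl))
      exact (tD e2).2 ⟨v, hv, hi⟩
    simp only [col]
    rw [if_neg b3.symm, if_neg b2.symm, if_neg hge2.symm, if_pos this]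
  have cc' : col c' = y := by
    have : s c' ∈ D ∨ t c' ∈ D := by
      obtain ⟨v, hv, hi⟩ := cr_end ((hDc c').2 (Or.inr rfl))
      exact (tD c').2 ⟨v, hv, hi⟩
    simp only [col]
    rw [if_neg p2.symm, if_neg hc1, if_neg p3.symm, if_pos this]
  have ch2 : col h2 = x := by
    by_cases h : h2 = g
    · rw [h, cg]
    have h2e1 : h2 ≠ e1 := by
      intro h'
      exact h2T h b hbR (by rw [h']; exact ib1) hbT
    simp only [col]
    rw [if_neg h2e1, if_neg hh.symm, if_neg h, if_neg (h2D h), hF2]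
  have Sb : S s t col b = {x, y, x + y} := by
    rw [S_star hb, ch1, ce1, ce2]
    ext z; simp only [Finset.mem_insert, Finset.mem_singleton]; clear * -; tauto
  have Sc : S s t col c = {x, y, x + y} := by
    rw [S_star hc, cg, ce1, cc']
    ext z; simp only [Finset.mem_insert, Finset.mem_singleton]; clear * -; tauto
  have SD : ∀ v ∈ D, S s t col v = S s t col0 v := by
    intro v hv
    apply S_congr
    intro e he
    simp only [col]
    rw [if_neg, if_neg, if_neg, if_pos ((tD e).2 ⟨v, hv, he⟩)]
    · rintro rfl; exact gD v hv he
    · rintro rfl; exact h1D v hv he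
    · rintro rfl; exact e1D' v hv he
  have cross : ∀ e v w, v ∈ T → w ∈ R → w ∉ T → inc s t e v → inc s t e w → e = g := by
    intro e v w hv hw hwT hi1 hi2
    rcases (hT e).1 (cr_inc hi1 hi2 hv hwT) with rfl | h
    · exact absurd (hR1 w hw hi2 ▸ hbT) hwT
    · exact h
  have SO : ∀ v ∈ R, v ∉ T → S s t col v = S s t F v := by
    intro v hv hvT
    apply S_congr
    intro e he
    by_cases hg : e = g
    · rw [hg, cg, hFg]
    simp only [col]
    rw [if_neg, if_neg, if_neg hg, if_neg]
    · intro h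
      obtain ⟨w, hw, hi⟩ := (tD e).1 h
      exact hg (cross e w v hw.1 hv hvT hi he)
    · rintro rfl; exact hvT (hR1 v hv he ▸ hbT)
    · rintro rfl
      rcases e1D v he with rfl | rfl
      · exact hvT hbT
      · exact hvT hcT
  have hln : ∀ e v, v ∈ R → inc s t e v → line (F e) (S s t F v) := by
    intro e v hv hi
    obtain ⟨_, _, _, h⟩ := hst v hv
    obtain ⟨_, _, h'⟩ := star_at h hi
    exact flow_line h' hF hFnz
  have LL : line x {x, y, x + y} := line_self o4 o5 (Ne.symm o3)
  have hX : ∀ e w, w ∈ R → w ≠ b → w ≠ c → inc s t e b ∨ inc s t e c → inc s t e w →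
      nrm {x, y, x + y} (S s t col w) := by
    intro e w hw hwb hwc hi hiw
    by_cases hwT : w ∈ T
    · have hwD : w ∈ D := ⟨hwT, hwb, hwc⟩
      rw [SD w hwD]
      apply nrm_symm
      apply o6 w hwD
      rcases hi with hi | hi
      · rcases (hb.1 e).1 hi with rfl | rfl | rfl
        · exact absurd hiw (h1D w hwD)
        · exact absurd hiw (e1D' w hwD)
        · exact Or.inl hiw
      · rcases (hc.1 e).1 hi with rfl | rfl | rfl
        · exact absurd hiw (e1D' w hwD)
        · exact absurd hiw (gD w hwD)
        · exact Or.inr hiw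
    · have : e = g := by
        rcases hi with hi | hi
        · exact cross e b w hbT hw hwT hi hiw
        · exact cross e c w hcT hw hwT hi hiw
      subst this
      rw [SO w hw hwT]
      have h3 := hln e w hw hiw
      rw [hFg] at h3
      exact nrm_line LL h3
  have hLS : ∀ v, v = b ∨ v = c → S s t col v = {x, y, x + y} := by
    rintro v (rfl | rfl)
    · exact Sb
    · exact Sc
  refine ⟨col, ?_, ?_, ?_, ?_, ?_, ?_⟩
  · intro v hv
    by_cases hbc' : v = b ∨ v = c
    · rw [hLS v hbc']; exact good_line LL
    push Not at hbc'
    by_cases hvT : v ∈ T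
    · have hvD : v ∈ D := ⟨hvT, hbc'⟩
      rw [SD v hvD]; exact o1 v hvD
    · rw [SO v hv hvT]
      obtain ⟨x, _, _, h'⟩ := hst v hv
      exact good_line (hln x v hv (star_inc h').1)
  · intro e v w hv hw hne hi1 hi2
    by_cases hv' : v = b ∨ v = c
    · rw [hLS v hv']
      by_cases hw' : w = b ∨ w = c
      · rw [hLS w hw']; exact nrm_line LL LL
      push Not at hw'
      refine hX e w hw hw'.1 hw'.2 ?_ hi2
      rcases hv' with rfl | rfl
      · exact Or.inl hi1
      · exact Or.inr hi1
    by_cases hw' : w = b ∨ w = c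
    · rw [hLS w hw']
      push Not at hv'
      refine nrm_symm (hX e v hv hv'.1 hv'.2 ?_ hi1)
      rcases hw' with rfl | rfl
      · exact Or.inl hi2
      · exact Or.inr hi2
    push Not at hv' hw'
    by_cases hvT : v ∈ T <;> by_cases hwT : w ∈ T
    · have hvD : v ∈ D := ⟨hvT, hv'⟩
      have hwD : w ∈ D := ⟨hwT, hw'⟩
      rw [SD v hvD, SD w hwD]
      exact o2 e v w hvD hwD hne hi1 hi2
    · have := cross e v w hvT hw hwT hi1 hi2
      subst this
      exact absurd hi1 (gD v ⟨hvT, hv'⟩)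
    · have := cross e w v hwT hv hvT hi2 hi1
      subst this
      exact absurd hi2 (gD w ⟨hwT, hw'⟩)
    · rw [SO v hv hvT, SO w hw hwT]
      exact nrm_line (hln e v hv hi1) (hln e w hw hi2)
  · rw [ch1, ch2]; exact Ne.symm o3
  · rw [ch1]; exact o5
  · rw [ch2]; exact o4
  · intro v hv hi
    rw [ch1, ch2, set_swap]
    rcases hi with hi | hi
    · rw [hLS v (Or.inl (hR1 v hv hi))]; exact nrm_line LL LL
    · by_cases h : h2 = g
      · subst h
        have : v = c := by
          by_contra hne
          exact cr_inc' ic1 hi ((hcut h2).2 (Or.inr rfl)) hcR (Ne.symm hne) hv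
        rw [hLS v (Or.inr this)]; exact nrm_line LL LL
      · rw [SO v hv (h2T h v hv hi)]
        have h3 := hln h2 v hv hi
        rw [hF2] at h3
        exact nrm_line h3 LL

theorem claim (s t : E → V) (hbr : ∀ R, (cut s t R).card ≠ 1) : ∀ n : ℕ, ∀ (R : Set V) (h1 h2 : E),
    R.ncard = n → (∀ e, cr s t R e ↔ e = h1 ∨ e = h2) → h1 ≠ h2 →
    (∀ v ∈ R, ∃ x y z, star s t v x y z) →
    (∀ v ∈ R, ∀ w, w ≠ v → ∀ e e', inc s t e v → inc s t e w → inc s t e' v → inc s t e' w →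
      e = e') → ∃ col, okc s t col R h1 h2 := by
  intro n
  induction n using Nat.strong_induction_on with
  | _ n ih =>
  intro R h1 h2 hn hcut hh hst hpar
  obtain ⟨b, hbR, hbi⟩ := cr_end ((hcut h1).2 (Or.inl rfl))
  obtain ⟨_, _, _, hb0⟩ := hst b hbR
  obtain ⟨e1, e2, hb⟩ := star_at hb0 hbi
  have IH : ∀ D ⊆ R, b ∉ D → ∀ k1 k2, k1 ≠ k2 → (∀ e, cr s t D e ↔ e = k1 ∨ e = k2) →
      ∃ col, okc s t col D k1 k2 := by
    intro D hD hbD k1 k2 hk hc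
    refine ih D.ncard ?_ D k1 k2 rfl hc hk (fun v hv => hst v (hD hv))
      (fun v hv => hpar v (hD hv))
    rw [← hn]
    exact Set.ncard_lt_ncard ⟨hD, fun h => hbD (h hbR)⟩ (Set.toFinite _)
  have b1 := hb.2.2.2.2.1
  have b2 := hb.2.2.2.2.2.1
  have b3 := hb.2.2.2.2.2.2
  obtain ⟨ib0, ib1, ib2⟩ := star_inc hb
  have hP : P2 s t h1 h2 := ⟨R, hcut⟩
  have n1 : e1 ≠ h2 := by rintro rfl; exact (star_no hbr hb).1 hP
  have n2 : e2 ≠ h2 := by rintro rfl; exact (star_no hbr hb).2.1 hP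
  obtain ⟨c, hcb, ic⟩ := other_end ib1 hb.2.2.1
  obtain ⟨d, hdb, id'⟩ := other_end ib2 hb.2.2.2.1
  have hcR : c ∈ R := by
    by_contra h
    rcases (hcut e1).1 (cr_inc ib1 ic hbR h) with h | h
    · exact b1 h.symm
    · exact n1 h
  have hdR : d ∈ R := by
    by_contra h
    rcases (hcut e2).1 (cr_inc ib2 id' hbR h) with h | h
    · exact b2 h.symm
    · exact n2 h
  have hcd : c ≠ d := by
    rintro rfl
    exact b3 (hpar b hbR c hcb e1 e2 ib1 ic ib2 id')
  obtain ⟨_, _, _, hc0⟩ := hst c hcR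
  obtain ⟨c1, c2, hc⟩ := star_at hc0 ic
  obtain ⟨_, _, _, hd0⟩ := hst d hdR
  obtain ⟨d1, d2, hd⟩ := star_at hd0 id'
  obtain ⟨ic0, ic1, ic2⟩ := star_inc hc
  obtain ⟨id0, id1, id2⟩ := star_inc hd
  have m1 : e2 ≠ c1 := by
    rintro rfl; exact b3 (hpar b hbR c hcb e1 e2 ib1 ic ib2 ic1)
  have m2 : e2 ≠ c2 := by
    rintro rfl; exact b3 (hpar b hbR c hcb e1 e2 ib1 ic ib2 ic2)
  have m3 : e1 ≠ d1 := by
    rintro rfl; exact b3 (hpar b hbR d hdb e1 e2 ib1 id1 ib2 id0)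
  have m4 : e1 ≠ d2 := by
    rintro rfl; exact b3 (hpar b hbR d hdb e1 e2 ib1 id2 ib2 id0)
  by_cases q1 : P2 s t h1 c1
  · exact claim_bad s t hbr hcut hh hst hb hc hbR hcR hcb.symm m2 q1 IH
  by_cases q2 : P2 s t h1 c2
  · exact claim_bad s t hbr hcut hh hst hb (star_swap hc) hbR hcR hcb.symm m1 q2 IH
  by_cases q3 : P2 s t h1 d1
  · exact claim_bad s t hbr hcut hh hst (star_swap hb) hd hbR hdR hdb.symm m4 q3 IH
  by_cases q4 : P2 s t h1 d2
  · exact claim_bad s t hbr hcut hh hst (star_swap hb) (star_swap hd) hbR hdR hdb.symm m3 q4 IH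
  exact claim_good s t hbr hcut hh hst hb hc hd hbR hcR hdR hcb.symm hdb.symm hcd q1 q2 q3 q4

end
end N7
namespace N7
section
open scoped Classical
open Finset
set_option linter.unusedSectionVars false
set_option linter.unusedSimpArgs false

variable {V : Type*} [Fintype V] {G : SimpleGraph V}

lemma reach_iff {H : SimpleGraph V} {T : Set V} (h : ∀ a b, H.Adj a b → (a ∈ T ↔ b ∈ T)) {a b : V}
    (hr : H.Reachable a b) : a ∈ T ↔ b ∈ T := by
  obtain ⟨w⟩ := hr
  induction w with
  | nil => exact Iff.rfl
  | cons h1 _ ih => exact (h _ _ h1).trans ih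

/-- leaf -/
def leaf (G : SimpleGraph V) (v : V) : Prop := (G.neighborSet v).ncard = 1

/-- only leaf of its component -/
def lonely (G : SimpleGraph V) (v : V) : Prop := leaf G v ∧ ∀ w, leaf G w → G.Reachable v w → w = v

/-- the identification map -/
def isPi (G : SimpleGraph V) (π : V → V) : Prop :=
  (∀ v, lonely G v → G.Adj v (π v)) ∧
  (∀ v w, leaf G v → ¬ lonely G v → leaf G w → ¬ lonely G w → π v = π w) ∧
  (∀ v, leaf G v → ¬ lonely G v → leaf G (π v)) ∧
  (∀ v, ¬ leaf G v → π v = v)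

lemma leaf_nb {v : V} (h : leaf G v) : ∃ u, G.Adj v u ∧ ∀ w, G.Adj v w → w = u := by
  obtain ⟨u, hu⟩ := Set.ncard_eq_one.1 h
  refine ⟨u, ?_, ?_⟩
  · have : u ∈ G.neighborSet v := by rw [hu]; rfl
    exact this
  · intro w hw
    have : w ∈ G.neighborSet v := hw
    rw [hu] at this
    exact this

lemma exists_pi (G : SimpleGraph V) : ∃ π, isPi G π := by
  have h1 : ∀ v, ∃ u, lonely G v → G.Adj v u := by
    intro v
    by_cases h : lonely G v
    · obtain ⟨u, hu, _⟩ := leaf_nb h.1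
      exact ⟨u, fun _ => hu⟩
    · exact ⟨v, fun h' => absurd h' h⟩
  choose nb hnb using h1
  have h2 : ∀ v, ∃ u, leaf G v → ¬ lonely G v → leaf G u := fun v => ⟨v, fun h _ => h⟩
  by_cases h : ∃ v0, leaf G v0 ∧ ¬ lonely G v0
  · obtain ⟨v0, a1, a2⟩ := h
    refine ⟨fun v => if lonely G v then nb v else if leaf G v then v0 else v, ?_, ?_, ?_, ?_⟩
    · intro v hv; simp only [if_pos hv]; exact hnb v hv
    · intro v w b1 b2 b3 b4; simp [b1, b2, b3, b4]
    · intro v b1 b2; simp [b1, b2, a1]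
    · intro v b1
      have : ¬ lonely G v := fun h => b1 h.1
      simp [b1, this]
  · push Not at h
    refine ⟨fun v => if lonely G v then nb v else v, ?_, ?_, ?_, ?_⟩
    · intro v hv; simp only [if_pos hv]; exact hnb v hv
    · intro v w b1 b2; exact absurd (h v b1) b2
    · intro v b1 b2; exact absurd (h v b1) b2
    · intro v b1
      have : ¬ lonely G v := fun h => b1 h.1
      simp [b1, this]

/-- endpoints -/
def ends (p q : G.edgeSet → V) : Prop := ∀ e, s(p e, q e) = e.1

lemma exists_ends (G : SimpleGraph V) : ∃ p q : G.edgeSet → V, ends p q := by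
  have : ∀ z : Sym2 V, ∃ a b, s(a, b) = z := by
    intro z; induction z with | _ a b => exact ⟨a, b, rfl⟩
  choose a b h using this
  exact ⟨fun e => a e.1, fun e => b e.1, fun e => h e.1⟩

lemma ends_adj {p q : G.edgeSet → V} (h : ends p q) (e : G.edgeSet) : G.Adj (p e) (q e) := by
  rw [← SimpleGraph.mem_edgeSet, h e]; exact e.2

lemma ends_mem {p q : G.edgeSet → V} (h : ends p q) (e : G.edgeSet) (w : V) :
    w ∈ e.1 ↔ p e = w ∨ q e = w := by
  rw [← h e, Sym2.mem_iff]; tauto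

lemma ends_cases {p q : G.edgeSet → V} (h : ends p q) {a b : V} (hab : G.Adj a b) :
    (p ⟨s(a, b), hab⟩ = a ∧ q ⟨s(a, b), hab⟩ = b) ∨
      (p ⟨s(a, b), hab⟩ = b ∧ q ⟨s(a, b), hab⟩ = a) := by
  have := h ⟨s(a, b), hab⟩
  simpa [Sym2.eq_iff] using this

lemma bl {p q : G.edgeSet → V} (h : ends p q) {π : V → V} (hπ : isPi G π)
    (hbr : ∀ e ∈ G.edgeSet, G.IsBridge e → ∃ v ∈ e, leaf G v) (R : Set V) :
    (cut (fun e => π (p e)) (fun e => π (q e)) R).card ≠ 1 := by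
  intro hc
  obtain ⟨e, he⟩ := Finset.card_eq_one.1 hc
  have hcr : ∀ e', cr (fun e => π (p e)) (fun e => π (q e)) R e' ↔ e' = e := by
    intro e'; rw [← mem_cut, he]; simp
  let T : Set V := {v | π v ∈ R}
  have hTe : ¬ (p e ∈ T ↔ q e ∈ T) := (hcr e).2 rfl
  have hTn : ∀ a b, G.Adj a b → s(a, b) ≠ e.1 → (a ∈ T ↔ b ∈ T) := by
    intro a b hab hne
    have h1 : ¬ cr (fun e => π (p e)) (fun e => π (q e)) R ⟨s(a, b), hab⟩ := by
      rw [hcr]; intro h; apply hne; rw [← h]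
    unfold cr at h1
    have h2 : p ⟨s(a, b), hab⟩ ∈ T ↔ q ⟨s(a, b), hab⟩ ∈ T := not_not.1 h1
    rcases ends_cases h hab with ⟨h3, h4⟩ | ⟨h3, h4⟩
    · rwa [h3, h4] at h2
    · rw [h3, h4] at h2; exact h2.symm
  have hbri : G.IsBridge e.1 := by
    rw [← h e, SimpleGraph.isBridge_iff]
    intro hr
    apply hTe
    refine reach_iff ?_ hr
    intro a b hab
    rw [SimpleGraph.deleteEdges_adj] at hab
    refine hTn a b hab.1 ?_
    rw [← h e]
    intro h'
    exact hab.2 h'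
  obtain ⟨v, hve, hv⟩ := hbr e.1 e.2 hbri
  obtain ⟨u, hu, huu⟩ := leaf_nb hv
  have heuv : e.1 = s(v, u) := by
    have ha := ends_adj h e
    rcases (ends_mem h e v).1 hve with h' | h'
    · rw [← h e, h']; rw [h'] at ha; rw [huu _ ha]
    · rw [← h e, h']; rw [h'] at ha; rw [huu _ ha.symm]; exact Sym2.eq_swap
  have hTuv : ¬ (v ∈ T ↔ u ∈ T) := by
    have h1 := h e
    rw [heuv, Sym2.eq_iff] at h1
    rcases h1 with ⟨h3, h4⟩ | ⟨h3, h4⟩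
    · rwa [h3, h4] at hTe
    · rw [h3, h4] at hTe; exact fun h => hTe h.symm
  by_cases hl : lonely G v
  · have := huu _ (hπ.1 v hl)
    apply hTuv
    have hul : ¬ leaf G u := by
      intro h'
      have := hl.2 u h' hu.reachable
      rw [this] at hu
      exact G.loopless.irrefl _ hu
    have h2 := hπ.2.2.2 u hul
    change π v ∈ R ↔ π u ∈ R
    rw [this, h2]
  · have : ∃ w, leaf G w ∧ G.Reachable v w ∧ w ≠ v := by
      by_contra h'
      push Not at h'
      exact hl ⟨hv, h'⟩
    obtain ⟨w, hw, hrw, hwv⟩ := this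
    have hlw : ¬ lonely G w := fun h => hwv (h.2 v hv hrw.symm).symm
    have hπw : π v = π w := hπ.2.1 v w hv hl hw hlw
    have hvw : v ∈ T ↔ w ∈ T := by
      change π v ∈ R ↔ π w ∈ R
      rw [hπw]
    -- the set of vertices on the side of `v`, without `v`
    let T' : Set V := {z | z ≠ v ∧ (z ∈ T ↔ v ∈ T)}
    have hcl : ∀ a b, G.Adj a b → (a ∈ T' ↔ b ∈ T') := by
      intro a b hab
      change (a ≠ v ∧ (a ∈ T ↔ v ∈ T)) ↔ (b ≠ v ∧ (b ∈ T ↔ v ∈ T))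
      by_cases hav : a = v
      · subst hav
        have := huu b hab
        subst this
        clear * - hTuv
        tauto
      by_cases hbv : b = v
      · subst hbv
        have := huu a hab.symm
        subst this
        clear * - hTuv
        tauto
      have h3 := hTn a b hab (by
        rw [heuv]; intro h'
        rw [Sym2.eq_iff] at h'
        rcases h' with h' | h'
        · exact hav h'.1
        · exact hbv h'.2)
      rw [h3]
      simp [hav, hbv]
    have h4 := reach_iff hcl hrw
    have h5 : w ∈ T' := ⟨hwv, hvw.symm⟩
    exact (h4.2 h5).1 rfl

end
end N7
namespace N7
section
open scoped Classical
open Finset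
set_option linter.unusedSectionVars false
set_option linter.unusedSimpArgs false

variable {V : Type*} [Fintype V] {G : SimpleGraph V}

/-- color set in the graph -/
noncomputable def SG (col : G.edgeSet → A8) (w : V) : Finset A8 :=
  (univ.filter (fun e : G.edgeSet => w ∈ e.1)).image col

lemma SG_congr {w : V} {col col' : G.edgeSet → A8} (h : ∀ e, w ∈ e.1 → col e = col' e) :
    SG col w = SG col' w := by
  unfold SG
  refine Finset.image_congr ?_
  intro e he
  exact h e (by simpa using he)

lemma mem_three {w x y z : V} (hx : G.Adj w x) (hy : G.Adj w y) (hz : G.Adj w z)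
    (hn : ∀ a, G.Adj w a → a = x ∨ a = y ∨ a = z) (e : G.edgeSet) :
    w ∈ e.1 ↔ e = ⟨s(w, x), hx⟩ ∨ e = ⟨s(w, y), hy⟩ ∨ e = ⟨s(w, z), hz⟩ := by
  constructor
  · intro h
    obtain ⟨a, ha⟩ := Sym2.mem_iff_exists.1 h
    have hwa : G.Adj w a := by rw [← SimpleGraph.mem_edgeSet, ← ha]; exact e.2
    simp only [Subtype.ext_iff, ha]
    rcases hn a hwa with rfl | rfl | rfl <;> simp
  · rintro (rfl | rfl | rfl) <;> simp

lemma nb_three {w : V} (h : (G.neighborSet w).ncard = 3) : ∃ x y z, x ≠ y ∧ x ≠ z ∧ y ≠ z ∧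
    G.Adj w x ∧ G.Adj w y ∧ G.Adj w z ∧ ∀ a, G.Adj w a → a = x ∨ a = y ∨ a = z := by
  obtain ⟨x, y, z, h1, h2, h3, h4⟩ := Set.ncard_eq_three.1 h
  have : ∀ a, G.Adj w a ↔ a = x ∨ a = y ∨ a = z := by
    intro a
    rw [← SimpleGraph.mem_neighborSet, h4]; simp
  exact ⟨x, y, z, h1, h2, h3, (this x).2 (by simp), (this y).2 (by simp), (this z).2 (by simp),
    fun a => (this a).1⟩

lemma inc_iff {p q : G.edgeSet → V} (h : ends p q) {π : V → V} {w : V}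
    (hfix : ∀ w', π w' = w ↔ w' = w) (e : G.edgeSet) :
    inc (fun e => π (p e)) (fun e => π (q e)) e w ↔ w ∈ e.1 := by
  rw [ends_mem h]
  unfold inc
  rw [hfix, hfix]

lemma S_eq {p q : G.edgeSet → V} (h : ends p q) {π : V → V} {w : V}
    (hfix : ∀ w', π w' = w ↔ w' = w) (col : G.edgeSet → A8) :
    S (fun e => π (p e)) (fun e => π (q e)) col w = SG col w := by
  unfold S SG
  congr 1
  ext e
  rw [Finset.mem_filter_univ, Finset.mem_filter_univ, inc_iff h hfix]

lemma star_of {p q : G.edgeSet → V} (h : ends p q) {π : V → V} {w : V}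
    (hfix : ∀ w', π w' = w ↔ w' = w) (hw : (G.neighborSet w).ncard = 3) :
    ∃ x y z, star (fun e => π (p e)) (fun e => π (q e)) w x y z := by
  obtain ⟨x, y, z, h1, h2, h3, hx, hy, hz, hn⟩ := nb_three hw
  have hm := mem_three hx hy hz hn
  have hl : ∀ e : G.edgeSet, w ∈ e.1 → π (p e) ≠ π (q e) := by
    intro e he heq
    have hne := (ends_adj h e).ne
    rcases (ends_mem h e w).1 he with h' | h'
    · have : π (p e) = w := (hfix _).2 h'
      rw [heq, hfix] at this
      exact hne (h'.trans this.symm)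
    · have : π (q e) = w := (hfix _).2 h'
      rw [← heq, hfix] at this
      exact hne (this.trans h'.symm)
  refine ⟨_, _, _, fun e => (inc_iff h hfix e).trans (hm e), hl _ ?_, hl _ ?_, hl _ ?_, ?_, ?_, ?_⟩
  · simp
  · simp
  · simp
  · intro h'
    have := Subtype.ext_iff.1 h'
    simp only [Sym2.eq_iff] at this
    rcases this with h | h
    · exact h1 h.2
    · exact hy.ne h.1
  · intro h'
    have := Subtype.ext_iff.1 h'
    simp only [Sym2.eq_iff] at this
    rcases this with h | h
    · exact h2 h.2
    · exact hz.ne h.1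
  · intro h'
    have := Subtype.ext_iff.1 h'
    simp only [Sym2.eq_iff] at this
    rcases this with h | h
    · exact h3 h.2
    · exact hz.ne h.1

/-- the coloring is valid on a component -/
def okcomp (col : G.edgeSet → A8) (C : G.ConnectedComponent) : Prop :=
  (∀ w, G.connectedComponentMk w = C → (G.neighborSet w).ncard = 3 → good3 (SG col w)) ∧
  (∀ w w', G.connectedComponentMk w = C → G.connectedComponentMk w' = C →
    (G.neighborSet w).ncard = 3 → (G.neighborSet w').ncard = 3 →
    G.Adj w w' → nrm (SG col w) (SG col w')) ∧
  ∀ e : G.edgeSet, ∀ w ∈ e.1, G.connectedComponentMk w = C → col e ≠ 0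

lemma fix_of {π : V → V} (hπ : isPi G π) {w : V} (hw : ¬ leaf G w)
    (hl : ∀ v, lonely G v → ¬ G.Adj v w) (w' : V) : π w' = w ↔ w' = w := by
  constructor
  · intro h
    by_cases h1 : lonely G w'
    · have := hπ.1 _ h1
      rw [h] at this
      exact absurd this (hl _ h1)
    by_cases h2 : leaf G w'
    · have := hπ.2.2.1 _ h2 h1
      rw [h] at this
      exact absurd this hw
    · rw [hπ.2.2.2 _ h2] at h; exact h
  · rintro rfl; exact hπ.2.2.2 _ hw

lemma comp_adj {a b : V} (h : G.Adj a b) : G.connectedComponentMk a = G.connectedComponentMk b :=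
  SimpleGraph.ConnectedComponent.eq.2 h.reachable

lemma comp_A {p q : G.edgeSet → V} (h : ends p q) {π : V → V} (hπ : isPi G π)
    (hbr : ∀ R, (cut (fun e => π (p e)) (fun e => π (q e)) R).card ≠ 1)
    (C : G.ConnectedComponent) (hC : ∀ v, lonely G v → G.connectedComponentMk v ≠ C) :
    ∃ col, okcomp col C := by
  obtain ⟨f, hf, hnz⟩ := flow8 _ _ hbr
  have hfx : ∀ w, G.connectedComponentMk w = C → (G.neighborSet w).ncard = 3 →
      ∀ w', π w' = w ↔ w' = w := by
    intro w hw h3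
    apply fix_of hπ
    · unfold leaf; rw [h3]; norm_num
    · intro v hv hvw
      exact hC v hv ((comp_adj hvw).trans hw)
  have hln : ∀ w, G.connectedComponentMk w = C → (G.neighborSet w).ncard = 3 →
      ∀ e : G.edgeSet, w ∈ e.1 → line (f e) (SG f w) := by
    intro w hw h3 e he
    have hfix := hfx w hw h3
    obtain ⟨_, _, _, hs⟩ := star_of h hfix h3
    obtain ⟨_, _, hs'⟩ := star_at hs ((inc_iff h hfix e).2 he)
    rw [← S_eq h hfix]
    exact flow_line hs' hf hnz
  refine ⟨f, ?_, ?_, fun e _ _ _ => hnz e⟩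
  · intro w hw h3
    obtain ⟨x, _, _, _, _, _, hx, _⟩ := nb_three h3
    exact good_line (hln w hw h3 ⟨s(w, x), hx⟩ (by simp))
  · intro w w' hw hw' h3 h3' hadj
    exact nrm_line (hln w hw h3 ⟨s(w, w'), hadj⟩ (by simp))
      (hln w' hw' h3' ⟨s(w, w'), hadj⟩ (by simp))

lemma comp_B {p q : G.edgeSet → V} (h : ends p q) {π : V → V} (hπ : isPi G π)
    (hdeg : ∀ v : V, (G.neighborSet v).ncard = 1 ∨ (G.neighborSet v).ncard = 3)
    (hbr : ∀ R, (cut (fun e => π (p e)) (fun e => π (q e)) R).card ≠ 1)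
    (C : G.ConnectedComponent) (v : V) (hv : lonely G v) (hC : G.connectedComponentMk v = C) :
    ∃ col, okcomp col C := by
  obtain ⟨u, hvu, hvn⟩ := leaf_nb hv.1
  have hlf : ∀ w, G.connectedComponentMk w = C → w ≠ v → (G.neighborSet w).ncard = 3 := by
    intro w hw hne
    rcases hdeg w with h1 | h1
    · exact absurd (hv.2 w h1 (SimpleGraph.ConnectedComponent.eq.1 (hC.trans hw.symm))) hne
    · exact h1
  have huC : G.connectedComponentMk u = C := (comp_adj hvu).symm.trans hC
  have hu3 := hlf u huC hvu.ne.symm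
  -- the two other neighbors
  obtain ⟨a, b, hab, hua, hub, hav, hbv, hun⟩ : ∃ a b, a ≠ b ∧ G.Adj u a ∧ G.Adj u b ∧ a ≠ v ∧
      b ≠ v ∧ ∀ z, G.Adj u z → z = a ∨ z = b ∨ z = v := by
    obtain ⟨x, y, z, h1, h2, h3, hx, hy, hz, hn⟩ := nb_three hu3
    rcases hn v hvu.symm with rfl | rfl | rfl
    · exact ⟨y, z, h3, hy, hz, h1.symm, h2.symm, fun a ha => by have := hn a ha; tauto⟩
    · exact ⟨x, z, h2, hx, hz, h1, h3.symm, fun a ha => by have := hn a ha; tauto⟩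
    · exact ⟨x, y, h1, hx, hy, h2, h3, fun a ha => by have := hn a ha; tauto⟩
  let R : Set V := {w | G.connectedComponentMk w = C ∧ w ≠ u ∧ w ≠ v}
  have hR : ∀ w, w ∈ R ↔ G.connectedComponentMk w = C ∧ w ≠ u ∧ w ≠ v := fun w => Iff.rfl
  have haR : a ∈ R := ⟨(comp_adj hua).symm.trans huC, hua.ne.symm, hav⟩
  have hbR : b ∈ R := ⟨(comp_adj hub).symm.trans huC, hub.ne.symm, hbv⟩
  have hfx : ∀ w ∈ R, ∀ w', π w' = w ↔ w' = w := by
    intro w hw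
    apply fix_of hπ
    · unfold leaf; rw [hlf w hw.1 hw.2.2]; norm_num
    · intro v' hv' hvw
      have : v = v' := hv'.2 v hv.1 (SimpleGraph.ConnectedComponent.eq.1
        ((comp_adj hvw).trans (hw.1.trans hC.symm)))
      subst this
      exact hw.2.1 (hvn w hvw)
  have hπR : ∀ w, π w ∈ R ↔ w ∈ R := by
    intro w
    constructor
    · intro hw
      have := (hfx _ hw w).1 rfl
      rw [this]; exact hw
    · intro hw
      rw [(hfx w hw w).2 rfl]; exact hw
  let h1 : G.edgeSet := ⟨s(u, a), hua⟩
  let h2 : G.edgeSet := ⟨s(u, b), hub⟩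
  let h0 : G.edgeSet := ⟨s(u, v), hvu.symm⟩
  have huR : u ∉ R := fun h => h.2.1 rfl
  have hvR : v ∉ R := fun h => h.2.2 rfl
  have hhn : h1 ≠ h2 := by
    intro h'
    have := Subtype.ext_iff.1 h'
    simp only [h1, h2, Sym2.eq_iff] at this
    rcases this with h | h
    · exact hab h.2
    · exact hub.ne h.1
  have hout : ∀ x y, G.Adj x y → x ∈ R → y ∉ R → y = u ∧ (x = a ∨ x = b) := by
    intro x y hxy hx hy
    have hyC : G.connectedComponentMk y = C := (comp_adj hxy).symm.trans hx.1
    have : y = u ∨ y = v := by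
      by_contra h'
      push Not at h'
      exact hy ⟨hyC, h'⟩
    rcases this with rfl | rfl
    · refine ⟨rfl, ?_⟩
      rcases hun x hxy.symm with h | h | h
      · exact Or.inl h
      · exact Or.inr h
      · exact absurd h hx.2.2
    · exact absurd (hvn x hxy.symm) hx.2.1
  have hcut : ∀ e, cr (fun e => π (p e)) (fun e => π (q e)) R e ↔ e = h1 ∨ e = h2 := by
    intro e
    have : cr (fun e => π (p e)) (fun e => π (q e)) R e ↔ ¬ (p e ∈ R ↔ q e ∈ R) := by
      unfold cr; rw [hπR, hπR]
    rw [this]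
    constructor
    · intro hc
      have hadj := ends_adj h e
      have he := h e
      by_cases hp : p e ∈ R
      · have hq : q e ∉ R := fun hq => hc ⟨fun _ => hq, fun _ => hp⟩
        obtain ⟨h3, h4⟩ := hout _ _ hadj hp hq
        rw [h3] at he
        rcases h4 with h4 | h4
        · left; apply Subtype.ext; rw [← he, h4]; exact Sym2.eq_swap
        · right; apply Subtype.ext; rw [← he, h4]; exact Sym2.eq_swap
      · have hq : q e ∈ R := by
          by_contra hq; exact hc ⟨fun h => absurd h hp, fun h => absurd h hq⟩
        obtain ⟨h3, h4⟩ := hout _ _ hadj.symm hq hp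
        rw [h3] at he
        rcases h4 with h4 | h4
        · left; apply Subtype.ext; rw [← he, h4]
        · right; apply Subtype.ext; rw [← he, h4]
    · rintro (rfl | rfl)
      · rcases ends_cases h hua with ⟨x1, x2⟩ | ⟨x1, x2⟩
        · change ¬ (p ⟨s(u, a), hua⟩ ∈ R ↔ q ⟨s(u, a), hua⟩ ∈ R)
          rw [x1, x2]; tauto
        · change ¬ (p ⟨s(u, a), hua⟩ ∈ R ↔ q ⟨s(u, a), hua⟩ ∈ R)
          rw [x1, x2]; tauto
      · rcases ends_cases h hub with ⟨x1, x2⟩ | ⟨x1, x2⟩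
        · change ¬ (p ⟨s(u, b), hub⟩ ∈ R ↔ q ⟨s(u, b), hub⟩ ∈ R)
          rw [x1, x2]; tauto
        · change ¬ (p ⟨s(u, b), hub⟩ ∈ R ↔ q ⟨s(u, b), hub⟩ ∈ R)
          rw [x1, x2]; tauto
  have hpar : ∀ x ∈ R, ∀ w, w ≠ x → ∀ e e',
      inc (fun e => π (p e)) (fun e => π (q e)) e x → inc (fun e => π (p e)) (fun e => π (q e)) e w →
      inc (fun e => π (p e)) (fun e => π (q e)) e' x →
      inc (fun e => π (p e)) (fun e => π (q e)) e' w → e = e' := by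
    have key : ∀ x ∈ R, ∀ w, w ≠ x → ∀ e, inc (fun e => π (p e)) (fun e => π (q e)) e x →
        inc (fun e => π (p e)) (fun e => π (q e)) e w → e.1 = s(x, w) := by
      intro x hx w hw e hi1 hi2
      have hxe := (inc_iff h (hfx x hx) e).1 hi1
      have hpx := (hfx x hx x).2 rfl
      -- a neighbor of `x` is fixed
      have hnf : ∀ y, G.Adj x y → π y = y := by
        intro y hy
        apply hπ.2.2.2
        intro hyl
        have hyv : y = v := hv.2 y hyl (SimpleGraph.ConnectedComponent.eq.1
          (hC.trans (hx.1.symm.trans (comp_adj hy))))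
        subst hyv
        exact hx.2.1 (hvn x hy.symm)
      have hadj := ends_adj h e
      have he := h e
      change π (p e) = w ∨ π (q e) = w at hi2
      rcases (ends_mem h e x).1 hxe with h' | h'
      · rw [h'] at hadj he hi2
        rw [hnf _ hadj, hpx] at hi2
        rcases hi2 with h3 | h3
        · exact absurd h3.symm hw
        · rw [← he, h3]
      · rw [h'] at hadj he hi2
        rw [hnf _ hadj.symm, hpx] at hi2
        rcases hi2 with h3 | h3
        · rw [← he, h3]; exact Sym2.eq_swap
        · exact absurd h3.symm hw
    intro x hx w hw e e' i1 i2 i3 i4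
    apply Subtype.ext
    rw [key x hx w hw e i1 i2, key x hx w hw e' i3 i4]
  obtain ⟨col, o1, o2, o3, o4, o5, o6⟩ := claim (fun e => π (p e)) (fun e => π (q e)) hbr _ R h1 h2
    rfl hcut hhn (fun w hw => star_of h (hfx w hw) (hlf w hw.1 hw.2.2)) hpar
  let col' : G.edgeSet → A8 := fun e => if e = h0 then col h1 + col h2 else col e
  have h10 : h1 ≠ h0 := by
    intro h'
    have := Subtype.ext_iff.1 h'
    simp only [h1, h0, Sym2.eq_iff] at this
    rcases this with h | h
    · exact hav h.2
    · exact hvu.ne h.1.symm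
  have h20 : h2 ≠ h0 := by
    intro h'
    have := Subtype.ext_iff.1 h'
    simp only [h2, h0, Sym2.eq_iff] at this
    rcases this with h | h
    · exact hbv h.2
    · exact hvu.ne h.1.symm
  have SR : ∀ w ∈ R, SG col' w = S (fun e => π (p e)) (fun e => π (q e)) col w := by
    intro w hw
    rw [S_eq h (hfx w hw)]
    apply SG_congr
    intro e he
    have : e ≠ h0 := by
      rintro rfl
      rcases Sym2.mem_iff.1 he with h' | h'
      · exact hw.2.1 h'
      · exact hw.2.2 h'
    simp only [col', if_neg this]
  have Su : SG col' u = {col h1, col h2, col h1 + col h2} := by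
    have hm := mem_three hua hub hvu.symm hun
    have : univ.filter (fun e : G.edgeSet => u ∈ e.1) = {h1, h2, h0} := by
      ext e; rw [Finset.mem_filter_univ, hm]; simp [h1, h2, h0]
    unfold SG
    rw [this]
    simp [col', h10, h20]
  have hsp : ∀ w, G.connectedComponentMk w = C → (G.neighborSet w).ncard = 3 → w = u ∨ w ∈ R := by
    intro w hw h3
    by_cases hwu : w = u
    · exact Or.inl hwu
    · refine Or.inr ⟨hw, hwu, ?_⟩
      rintro rfl
      have := hv.1
      unfold leaf at this
      omega
  have hbd : ∀ w ∈ R, G.Adj u w → nrm (SG col' u) (SG col' w) := by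
    intro w hw hadj
    rw [Su, SR w hw]
    apply nrm_symm
    apply o6 w hw
    rw [inc_iff h (hfx w hw), inc_iff h (hfx w hw)]
    rcases hun w hadj with rfl | rfl | rfl
    · left; simp [h1]
    · right; simp [h2]
    · exact absurd rfl hw.2.2
  have hgood : ∀ w, G.connectedComponentMk w = C → (G.neighborSet w).ncard = 3 →
      good3 (SG col' w) := by
    intro w hw h3
    rcases hsp w hw h3 with rfl | hwR
    · rw [Su]; exact dec2 _ _ o4 o5 (Ne.symm o3)
    · rw [SR w hwR]; exact o1 w hwR
  refine ⟨col', hgood, ?_, ?_⟩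
  · intro w w' hw hw' h3 h3' hadj
    rcases hsp w hw h3 with rfl | hwR
    · rcases hsp w' hw' h3' with rfl | hwR'
      · exact absurd rfl hadj.ne
      · exact hbd w' hwR' hadj
    · rcases hsp w' hw' h3' with rfl | hwR'
      · exact nrm_symm (hbd w hwR hadj.symm)
      · rw [SR w hwR, SR w' hwR']
        refine o2 ⟨s(w, w'), hadj⟩ w w' hwR hwR' hadj.ne ?_ ?_
        · rw [inc_iff h (hfx w hwR)]; simp
        · rw [inc_iff h (hfx w' hwR')]; simp
  · have key : ∀ e : G.edgeSet, ∀ w ∈ e.1, G.connectedComponentMk w = C →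
        (G.neighborSet w).ncard = 3 → col' e ≠ 0 := by
      intro e w he hw h3 h0'
      apply (hgood w hw h3).2
      unfold SG
      rw [← h0']
      exact Finset.mem_image_of_mem _ (by rw [Finset.mem_filter_univ]; exact he)
    intro e w he hw
    by_cases hwv : w = v
    · subst hwv
      obtain ⟨x, hx⟩ := Sym2.mem_iff_exists.1 he
      have hwx : G.Adj w x := by rw [← SimpleGraph.mem_edgeSet, ← hx]; exact e.2
      have := hvn x hwx
      subst this
      exact key e x (by rw [hx]; simp) huC hu3
    · exact key e w he hw (hlf w hw hwv)

theorem main_col (hdeg : ∀ v : V, (G.neighborSet v).ncard = 1 ∨ (G.neighborSet v).ncard = 3)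
    (hbr : ∀ e ∈ G.edgeSet, G.IsBridge e → ∃ v ∈ e, leaf G v) :
    ∃ col : G.edgeSet → A8, ∀ C, okcomp col C := by
  obtain ⟨p, q, h⟩ := exists_ends G
  obtain ⟨π, hπ⟩ := exists_pi G
  have hb := bl h hπ hbr
  have : ∀ C : G.ConnectedComponent, ∃ col, okcomp col C := by
    intro C
    by_cases hC : ∃ v, lonely G v ∧ G.connectedComponentMk v = C
    · obtain ⟨v, hv, hvC⟩ := hC
      exact comp_B h hπ hdeg hb C v hv hvC
    · push Not at hC
      exact comp_A h hπ hb C hC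
  choose cc hcc using this
  have hcol : ∀ e : G.edgeSet, ∀ w ∈ e.1,
      cc (G.connectedComponentMk (p e)) e = cc (G.connectedComponentMk w) e := by
    intro e w he
    rcases (ends_mem h e w).1 he with h' | h'
    · rw [h']
    · rw [comp_adj (ends_adj h e), h']
  have hS : ∀ w, SG (fun e => cc (G.connectedComponentMk (p e)) e) w =
      SG (cc (G.connectedComponentMk w)) w := fun w => SG_congr (fun e he => hcol e w he)
  refine ⟨fun e => cc (G.connectedComponentMk (p e)) e, fun C => ⟨?_, ?_, ?_⟩⟩
  · intro w hw h3
    rw [hS, hw]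
    exact (hcc C).1 w hw h3
  · intro w w' hw hw' h3 h3' hadj
    rw [hS, hS, hw, hw']
    exact (hcc C).2.1 w w' hw hw' h3 h3' hadj
  · intro e w he hw
    dsimp only
    rw [hcol e w he, hw]
    exact (hcc C).2.2 e w he hw

lemma exists_phi : ∃ φ : A8 → Fin 7, ∀ a b, a ≠ 0 → b ≠ 0 → φ a = φ b → a = b := by
  have hc : Fintype.card {a : A8 // a ≠ 0} = 7 := by decide
  let ψ := Fintype.equivFinOfCardEq hc
  refine ⟨fun a => if h : a ≠ 0 then ψ ⟨a, h⟩ else 0, ?_⟩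
  intro a b ha hb hab
  simp only [dif_pos ha, dif_pos hb] at hab
  exact Subtype.ext_iff.1 (ψ.injective hab)

end
end N7
open scoped Classical in
theorem stmt_14 {V : Type*} [Fintype V] (G : SimpleGraph V)
    (hdeg : ∀ v : V, (G.neighborSet v).ncard = 1 ∨ (G.neighborSet v).ncard = 3)
    (hbr : ∀ e ∈ G.edgeSet, G.IsBridge e → ∃ v ∈ e, (G.neighborSet v).ncard = 1) :
    ∃ c : Sym2 V → Fin 7,
      IsProperEdgeColoring G c ∧
      ∀ u v : V, G.Adj u v → (G.neighborSet u).ncard = 3 → (G.neighborSet v).ncard = 3 →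
        IsPoorAt G c u v ∨ IsRichAt G c u v := by
  obtain ⟨col, hcol⟩ := N7.main_col hdeg hbr
  obtain ⟨φ, hφ⟩ := N7.exists_phi
  have hnz : ∀ e, col e ≠ 0 := by
    intro e
    obtain ⟨p, q, h⟩ := N7.exists_ends G
    exact (hcol _).2.2 e (p e) ((N7.ends_mem h e _).2 (Or.inl rfl)) rfl
  let c : Sym2 V → Fin 7 := fun e => if h : e ∈ G.edgeSet then φ (col ⟨e, h⟩) else 0
  have hc : ∀ e : G.edgeSet, c e.1 = φ (col e) := by
    intro e; simp only [c, dif_pos e.2]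
  have hset : ∀ w, colorSet G c w = φ '' (↑(N7.SG col w) : Set N7.A8) := by
    intro w
    ext i
    constructor
    · rintro ⟨e, ⟨he, hwe⟩, rfl⟩
      refine ⟨col ⟨e, he⟩, ?_, (hc ⟨e, he⟩).symm⟩
      unfold N7.SG
      exact Finset.mem_coe.2 (Finset.mem_image_of_mem _ (by rw [Finset.mem_filter_univ]; exact hwe))
    · rintro ⟨a, ha, rfl⟩
      unfold N7.SG at ha
      obtain ⟨e, he, rfl⟩ := Finset.mem_image.1 (Finset.mem_coe.1 ha)
      rw [Finset.mem_filter_univ] at he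
      exact ⟨e.1, ⟨e.2, he⟩, hc e⟩
  refine ⟨c, ?_, ?_⟩
  · rintro e he f hf hne ⟨w, hwe, hwf⟩ heq
    rcases hdeg w with h1 | h3
    · obtain ⟨u, _, hu⟩ := N7.leaf_nb (G := G) h1
      obtain ⟨x, rfl⟩ := Sym2.mem_iff_exists.1 hwe
      obtain ⟨y, rfl⟩ := Sym2.mem_iff_exists.1 hwf
      exact hne (by rw [hu x he, hu y hf])
    · obtain ⟨x, y, z, _, _, _, hx, hy, hz, hn⟩ := N7.nb_three h3
      have hm := N7.mem_three hx hy hz hn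
      have hgood := ((hcol _).1 w rfl h3).1
      have hle : (Finset.univ.filter (fun e : G.edgeSet => w ∈ e.1)).card ≤ 3 := by
        have : Finset.univ.filter (fun e : G.edgeSet => w ∈ e.1) =
            {⟨s(w, x), hx⟩, ⟨s(w, y), hy⟩, ⟨s(w, z), hz⟩} := by
          ext e; rw [Finset.mem_filter_univ, hm]; simp
        rw [this]; exact Finset.card_le_three
      have hci : (N7.SG col w).card ≤ (Finset.univ.filter (fun e : G.edgeSet => w ∈ e.1)).card :=
        Finset.card_image_le
      have hinj := Finset.card_image_iff.1 (show (N7.SG col w).card =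
        (Finset.univ.filter (fun e : G.edgeSet => w ∈ e.1)).card by omega)
      rw [hc ⟨e, he⟩, hc ⟨f, hf⟩] at heq
      have h4 := hφ _ _ (hnz _) (hnz _) heq
      have h5 := hinj (x₁ := ⟨e, he⟩) (by simpa using hwe) (x₂ := ⟨f, hf⟩) (by simpa using hwf) h4
      exact hne (Subtype.ext_iff.1 h5)
  · intro u v huv hu hv
    have hn := (hcol _).2.1 u v rfl (N7.comp_adj huv).symm hu hv huv
    have hcard : (colorSet G c u ∪ colorSet G c v).ncard = (N7.SG col u ∪ N7.SG col v).card := by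
      rw [hset, hset, ← Set.image_union, ← Finset.coe_union, Set.InjOn.ncard_image,
        Set.ncard_coe_finset]
      have hnz' : ∀ w, ∀ a ∈ N7.SG col w, a ≠ 0 := by
        intro w a ha
        unfold N7.SG at ha
        obtain ⟨e, _, rfl⟩ := Finset.mem_image.1 ha
        exact hnz e
      have hnz2 : ∀ a ∈ N7.SG col u ∪ N7.SG col v, a ≠ 0 := by
        intro a ha
        rcases Finset.mem_union.1 ha with h | h
        · exact hnz' _ _ h
        · exact hnz' _ _ h
      intro a ha b hb hab
      exact hφ a b (hnz2 a (Finset.mem_coe.1 ha)) (hnz2 b (Finset.mem_coe.1 hb)) hab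
    unfold IsPoorAt IsRichAt
    rw [hcard]
    exact hn
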